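/- arXiv:2605.03449 — 3 statements merged into one kernel-verified Lean document; each statement's English description precedes it below -/
import Mathlib

section
/- Let R be a finite group. There exists a subgroup H of R such that every automorphism α of R with α(H) = H is a power automorphism (i.e., the base size of the action of Aut(R) on the set of all subgroups of R is 1) if and only if R is cyclic. -/
/-!
Suppose that every automorphism fixing `H` is a power automorphism. Conjugation by an element of
the normalizer of `H` is one, so `H` and its centralizer lie in Baer's norm, the group of elements
normalizing every subgroup. If `g` and `x` have coprime orders, then `⁅g, x⁆` centralizes the norm,
hence centralizes `H`, hence lies in the norm, and this forces `⁅g, x⁆ = 1`. So `G` is the direct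
product of its Sylow subgroups and `H` decomposes accordingly: `G` may be taken to be a `p`-group.

Let `N ≥ H` be normal with `G = N⟨x⟩`. If `c ∈ N` centralizes `N` and `(xc) ^ p = x ^ p`, then
`x ↦ xc` extends the identity of `N` to an automorphism of `G` fixing `H`, and therefore
`c ∈ ⟨x⟩`. For `N` maximal and `c` central this shows that the centre has only one subgroup of
order `p`. For `N` the kernel of `g ↦ ⁅g, c⁆`, with `c ∈ C(H)`, it shows that `c` commutes with `x`.
If every `c ^ p.choose 2` with `c` central of order `p` is the `p`-th power of a central element,
which is automatic for odd `p`, one deduces that all elements of order `p` are central and then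
that `G` is cyclic. Otherwise `p = 2` and some central involution `z` is not the square of a central
element; then no `t ∈ C(H)` satisfies `t ^ 2 = z`, whereas every `x ∉ {1, z}` satisfies `x ^ 2 = z`,
as in the quaternion group, so that any two noncommuting elements generate `G`. Hence `H`, which
may be assumed proper, is abelian, so `H ≤ C(H) ≤ ⟨z⟩` is central and `G = C(H) = ⟨z⟩`.
-/

open Subgroup
open scoped commutatorElement

section

variable {G : Type*} [Group G]

/-! ### Commutators and elements of prime order -/

theorem commute_of_mem_zpowers {a b g : G} (ha : a ∈ zpowers b) (hb : Commute b g) :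
    Commute a g := by
  obtain ⟨i, rfl⟩ := ha
  exact hb.zpow_left i

section CommutatorCalculus

variable {x k : G}

theorem commute_commutatorElement_swap {g : G} (h : Commute ⁅x, k⁆ g) : Commute ⁅k, x⁆ g := by
  rw [← commutatorElement_inv]
  exact h.inv_left

theorem commutatorElement_pow_right (h : Commute ⁅x, k⁆ k) (n : ℕ) :
    ⁅x, k ^ n⁆ = ⁅x, k⁆ ^ n := by
  induction n with
  | zero => simp
  | succ n ih =>
    calc ⁅x, k ^ (n + 1)⁆ = ⁅x, k⁆ * (k * ⁅x, k ^ n⁆ * k⁻¹) := by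
          simp only [commutatorElement_def, pow_succ']; group
      _ = ⁅x, k⁆ ^ (n + 1) := by
          rw [ih, ← (h.pow_left n).eq, mul_inv_cancel_right, pow_succ']

theorem commutatorElement_pow_left (h : Commute ⁅x, k⁆ x) (n : ℕ) :
    ⁅x ^ n, k⁆ = ⁅x, k⁆ ^ n := by
  rw [← commutatorElement_inv, commutatorElement_pow_right (commute_commutatorElement_swap h),
    ← commutatorElement_inv, inv_pow, inv_inv]

theorem mul_pow_mul_commutatorElement_pow_choose (hx : Commute ⁅x, k⁆ x) (hk : Commute ⁅x, k⁆ k)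
    (n : ℕ) : (x * k) ^ n * ⁅x, k⁆ ^ n.choose 2 = x ^ n * k ^ n := by
  induction n with
  | zero => simp
  | succ n ih =>
    set c := ⁅x, k⁆ with hc
    have hswap : x ^ n * k = c ^ n * (k * x ^ n) := by
      rw [hc, ← commutatorElement_pow_left hx, commutatorElement_def]; group
    have hxk : Commute (c ^ n) ((x * k) ^ n) := (hx.mul_right hk).pow_pow n n
    calc (x * k) ^ (n + 1) * c ^ (n + 1).choose 2
        = x * k * ((x * k) ^ n * c ^ n) * c ^ n.choose 2 := by
          rw [Nat.choose_succ_succ' n 1, Nat.choose_one_right, pow_succ', pow_add]; group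
      _ = x * (k * c ^ n) * ((x * k) ^ n * c ^ n.choose 2) := by rw [← hxk.eq]; group
      _ = x * (c ^ n * (k * x ^ n)) * k ^ n := by rw [← (hk.pow_left n).eq, ih]; group
      _ = x ^ (n + 1) * k ^ (n + 1) := by rw [← hswap]; group

end CommutatorCalculus

section PrimeOrder

variable {p : ℕ} [Fact p.Prime]

theorem mem_zpowers_of_pow_prime_eq_one [Finite G] {x e f : G} (he : e ∈ zpowers x)
    (hf : f ∈ zpowers x) (hep : e ^ p = 1) (hfp : f ^ p = 1) (hf1 : f ≠ 1) : e ∈ zpowers f := by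
  classical
  have := Fintype.ofFinite (zpowers x)
  let e' : zpowers x := ⟨e, he⟩
  let f' : zpowers x := ⟨f, hf⟩
  have hcard : Nat.card (zpowers f') = p := by
    rw [Nat.card_zpowers]
    exact orderOf_eq_prime (Subtype.ext hfp) fun h => hf1 (congrArg Subtype.val h)
  let roots : Finset (zpowers x) := {y | y ^ p = 1}
  have hle : (zpowers f' : Set (zpowers x)).toFinset ⊆ roots := fun y hy => by
    rw [Set.mem_toFinset] at hy
    obtain ⟨i, rfl⟩ := hy
    simp only [roots, Finset.mem_filter_univ]
    rw [← zpow_natCast, zpow_comm, zpow_natCast, Subtype.ext (a1 := f' ^ p) (a2 := 1) hfp, one_zpow]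
  have heq := Finset.eq_of_subset_of_card_le hle <| by
    rw [Set.toFinset_card, ← Nat.card_eq_fintype_card]
    exact (IsCyclic.card_pow_eq_one_le (Fact.out : p.Prime).pos).trans hcard.ge
  have hmem : e' ∈ roots := by simpa [roots] using Subtype.ext (a1 := e' ^ p) (a2 := 1) hep
  rw [← heq, Set.mem_toFinset] at hmem
  obtain ⟨i, hi⟩ := hmem
  exact ⟨i, congrArg Subtype.val hi⟩

theorem exists_pow_orderOf_eq_prime (hG : IsPGroup p G) {c : G} (hc : c ≠ 1) :
    ∃ m : ℕ, orderOf (c ^ p ^ m) = p := by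
  obtain ⟨n, hn⟩ := IsPGroup.iff_orderOf.1 hG c
  obtain ⟨m, rfl⟩ : ∃ m, n = m + 1 :=
    Nat.exists_eq_succ_of_ne_zero fun h => hc <| by simpa [h] using hn
  refine ⟨m, ?_⟩
  rw [orderOf_pow_of_dvd (pow_ne_zero m (Fact.out : p.Prime).ne_zero)
    (hn ▸ pow_dvd_pow p m.le_succ), hn, pow_succ,
    Nat.mul_div_cancel_left _ (pow_pos (Fact.out : p.Prime).pos m)]

theorem prime_dvd_of_zpow_mem (hG : IsPGroup p G) {M : Subgroup G} {x : G} (hx : x ∉ M) {i : ℤ}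
    (hi : x ^ i ∈ M) : (p : ℤ) ∣ i := by
  by_contra hpi
  obtain ⟨n, hn⟩ := IsPGroup.iff_orderOf.1 hG x
  have hcop : i.gcd (orderOf x) = 1 := by
    rw [← Int.isCoprime_iff_gcd_eq_one, hn, Nat.cast_pow]
    exact ((Prime.coprime_iff_not_dvd (Nat.prime_iff_prime_int.1 Fact.out)).2 hpi).symm.pow_right
  exact hx <| zpowers_le.2 hi <| mem_zpowers_zpow_iff.2 hcop

end PrimeOrder

/-! ### Baer's norm -/

theorem exists_monoidHom_of_conj_eq_conj {N : Subgroup G} [N.Normal] {x y : G}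
    (hsup : N ⊔ zpowers x = ⊤) (hconj : ∀ n ∈ N, y * n * y⁻¹ = x * n * x⁻¹)
    (hpow : ∀ i : ℤ, x ^ i ∈ N → y ^ i = x ^ i) :
    ∃ σ : G →* G, (∀ n ∈ N, σ n = n) ∧ σ x = y := by
  have hconj_zpow (i : ℤ) {n : G} (hn : n ∈ N) : y ^ i * n * (y ^ i)⁻¹ = x ^ i * n * (x ^ i)⁻¹ := by
    have h : MulAut.conjNormal y = (MulAut.conjNormal x : MulAut N) :=
      MulEquiv.ext fun m => Subtype.ext <| by simpa using hconj m m.2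
    have hi : MulAut.conjNormal (y ^ i) = (MulAut.conjNormal (x ^ i) : MulAut N) := by
      rw [map_zpow, map_zpow, h]
    simpa only [MulAut.conjNormal_apply] using
      congrArg (fun α : MulAut N => (α ⟨n, hn⟩ : G)) hi
  have hdecomp (g : G) : ∃ n ∈ N, ∃ i : ℤ, n * x ^ i = g := by
    obtain ⟨n, hn, _, ⟨i, rfl⟩, hg⟩ := mem_sup_of_normal_left.1 (hsup ▸ mem_top g)
    exact ⟨n, hn, i, hg⟩
  choose n hn i hni using hdecomp
  have hwell {m : G} (hm : m ∈ N) (j : ℤ) : n (m * x ^ j) * y ^ i (m * x ^ j) = m * y ^ j := by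
    set g := m * x ^ j with hg
    have h : m⁻¹ * n g = x ^ (j - i g) := by
      rw [zpow_sub, eq_mul_inv_iff_mul_eq, mul_assoc, hni g, hg, inv_mul_cancel_left]
    have hy := hpow (j - i g) (h ▸ mul_mem (inv_mem hm) (hn g))
    rw [← h, zpow_sub, mul_inv_eq_iff_eq_mul, mul_assoc, eq_inv_mul_iff_mul_eq] at hy
    exact hy.symm
  refine ⟨MonoidHom.mk' (fun g => n g * y ^ i g) fun g h => ?_, fun m hm => ?_, ?_⟩
  · have hgh : g * h = n g * (x ^ i g * n h * (x ^ i g)⁻¹) * x ^ (i g + i h) := by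
      nth_rewrite 1 [← hni g, ← hni h]
      rw [zpow_add]; group
    rw [hgh, hwell (mul_mem (hn g) (Normal.conj_mem ‹_› _ (hn h) _)), ← hconj_zpow _ (hn h),
      zpow_add]
    group
  · simpa using hwell hm 0
  · simpa using hwell (one_mem N) 1

/-- The norm of Baer: the subgroup of the elements which normalize every subgroup of `G`. It is
enough to normalize the cyclic ones. -/
def baerNorm (G : Type*) [Group G] : Subgroup G := ⨅ x : G, normalizer (zpowers x : Set G)

theorem mem_baerNorm {k : G} : k ∈ baerNorm G ↔ ∀ x : G, zpowers (k * x * k⁻¹) = zpowers x := by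
  simp only [baerNorm, mem_iInf, mem_normalizer_iff_map_conj_eq, MonoidHom.map_zpowers]
  rfl

theorem mem_baerNorm_iff_conj_mem_zpowers [Finite G] {k : G} :
    k ∈ baerNorm G ↔ ∀ x : G, k * x * k⁻¹ ∈ zpowers x := by
  refine ⟨fun h x => mem_baerNorm.1 h x ▸ mem_zpowers _, fun h => mem_baerNorm.2 fun x => ?_⟩
  refine eq_of_le_of_card_ge (zpowers_le.2 (h x)) (le_of_eq ?_)
  rw [Nat.card_zpowers, Nat.card_zpowers]
  exact ((MulAut.conj k).orderOf_eq x).symm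

instance baerNorm.normal : (baerNorm G).Normal where
  conj_mem k hk g := mem_baerNorm.2 fun x => by
    have h := congrArg (map (MulAut.conj g).toMonoidHom) (mem_baerNorm.1 hk (g⁻¹ * x * g))
    simp only [MonoidHom.map_zpowers, MulEquiv.toMonoidHom_eq_coe, MonoidHom.coe_coe,
      MulAut.conj_apply] at h
    convert h using 2 <;> group

namespace baerNorm

section Commutator

variable {k : G} (hk : k ∈ baerNorm G) (x : G)
include hk

theorem commutatorElement_mem_zpowers : ⁅x, k⁆ ∈ zpowers x := by
  have h : k * x⁻¹ * k⁻¹ ∈ zpowers x := by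
    rw [← zpowers_inv, ← mem_baerNorm.1 hk x⁻¹]
    exact mem_zpowers _
  rw [commutatorElement_def, mul_assoc x, mul_assoc x]
  exact mul_mem (mem_zpowers x) h

theorem commute_commutatorElement_left : Commute ⁅x, k⁆ x :=
  commute_of_mem_zpowers (commutatorElement_mem_zpowers hk x) (Commute.refl x)

theorem commute_commutatorElement_right : Commute ⁅x, k⁆ k := by
  have h : ⁅x * k, k⁆ = ⁅x, k⁆ := by simp [commutatorElement_def, mul_assoc]
  have hxk : Commute ⁅x, k⁆ (x * k) := h ▸ commute_commutatorElement_left hk (x * k)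
  simpa using (commute_commutatorElement_left hk x).inv_right.mul_right hxk

end Commutator

theorem commutatorElement_mem {k : G} (hk : k ∈ baerNorm G) (x : G) : ⁅x, k⁆ ∈ baerNorm G :=
  mul_mem (normal.conj_mem k hk x) (inv_mem hk)

theorem commutatorElement_pow_eq_one {k : G} (hk : k ∈ baerNorm G) {n : ℕ}
    (hkn : k ^ n ∈ center G) (x : G) : ⁅x, k⁆ ^ n = 1 := by
  rw [← commutatorElement_pow_right (commute_commutatorElement_right hk x)]
  exact commutatorElement_eq_one_iff_mul_comm.2 (mem_center_iff.1 hkn x)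

theorem mul_pow_mul_commutatorElement_pow {k : G} (hk : k ∈ baerNorm G) (x : G) (n : ℕ) :
    (x * k) ^ n * ⁅x, k⁆ ^ n.choose 2 = x ^ n * k ^ n :=
  mul_pow_mul_commutatorElement_pow_choose (commute_commutatorElement_left hk x)
    (commute_commutatorElement_right hk x) n

theorem commutatorElement_mem_center [Finite G] {p : ℕ} [Fact p.Prime] {a : G}
    (ha : a ∈ baerNorm G) (hap : a ^ p ∈ center G) (x : G) : ⁅x, a⁆ ∈ center G := by
  have hpow := commutatorElement_pow_eq_one ha hap
  set u := ⁅x, a⁆ with hu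
  have hun : u ∈ baerNorm G := commutatorElement_mem ha x
  have hux : Commute u x := commute_commutatorElement_left ha x
  refine mem_center_iff.2 fun g => ?_
  by_contra hgu
  set w := ⁅g, u⁆ with hw
  have hw1 : w ≠ 1 := fun h => hgu (commutatorElement_eq_one_iff_mul_comm.1 h)
  have hwp : w ^ p = 1 := by
    rw [hw, ← commutatorElement_pow_right (commute_commutatorElement_right hun g), hpow x,
      commutatorElement_one_right]
  have hwx : ⁅g * x, u⁆ = w := by
    rw [hw, commutatorElement_def, commutatorElement_def, mul_assoc g x, ← hux.eq]; group
  -- `w` generates the subgroup of order `p` in both `⟨g⟩` and `⟨gx⟩`.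
  have hga : ⁅g, a⁆ ∈ zpowers w :=
    mem_zpowers_of_pow_prime_eq_one (commutatorElement_mem_zpowers ha g)
      (commutatorElement_mem_zpowers hun g) (hpow g) hwp hw1
  have hgxa : ⁅g * x, a⁆ ∈ zpowers w :=
    mem_zpowers_of_pow_prime_eq_one (commutatorElement_mem_zpowers ha (g * x))
      (hwx ▸ commutatorElement_mem_zpowers hun (g * x)) (hpow (g * x)) hwp hw1
  have huw : u ∈ zpowers w := by
    have h : u = w⁻¹ * ⁅g * x, a⁆ * ⁅g, a⁆⁻¹ := by
      simp only [hw, hu, commutatorElement_def]; group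
    rw [h]
    exact mul_mem (mul_mem (inv_mem (mem_zpowers w)) hgxa) (inv_mem hga)
  exact hgu (commute_of_mem_zpowers huw (commute_commutatorElement_left hun g)).symm.eq

theorem mem_centralizer_of_pow_prime_eq_one [Finite G] {p : ℕ} [Fact p.Prime] {y : G}
    (hy : y ^ p = 1) : y ∈ centralizer (baerNorm G : Set G) := by
  refine mem_centralizer_iff.2 fun k hk => ?_
  by_contra hne
  have hc1 : ⁅y, k⁆ ≠ 1 := fun h => hne (commutatorElement_eq_one_iff_mul_comm.1 h).symm
  have hcp : ⁅y, k⁆ ^ p = 1 := by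
    rw [← commutatorElement_pow_left (commute_commutatorElement_left hk y), hy,
      commutatorElement_one_left]
  have hyc : y ∈ zpowers ⁅y, k⁆ := mem_zpowers_of_pow_prime_eq_one (mem_zpowers y)
    (commutatorElement_mem_zpowers hk y) hy hcp hc1
  exact hne (commute_of_mem_zpowers hyc (commute_commutatorElement_right hk y)).symm.eq

theorem commute_pow_orderOf {k : G} (hk : k ∈ baerNorm G) (g : G) :
    Commute g (k ^ orderOf g) := by
  rw [← commutatorElement_eq_one_iff_commute,
    commutatorElement_pow_right (commute_commutatorElement_right hk g),
    ← commutatorElement_pow_left (commute_commutatorElement_left hk g), pow_orderOf_eq_one,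
    commutatorElement_one_left]

theorem commute_commutatorElement_pow_orderOf {k : G} (hk : k ∈ baerNorm G) (g x : G) :
    Commute ⁅g, x⁆ (k ^ orderOf g) := by
  have hconj : Commute (x * g⁻¹ * x⁻¹) (k ^ orderOf g) := by
    have h := commute_pow_orderOf hk (x * g⁻¹ * x⁻¹)
    rwa [← MulAut.conj_apply, MulEquiv.orderOf_eq, orderOf_inv] at h
  simpa [commutatorElement_def, mul_assoc] using (commute_pow_orderOf hk g).mul_left hconj

theorem commutatorElement_mem_centralizer {g x : G} (hgx : (orderOf g).Coprime (orderOf x)) :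
    ⁅g, x⁆ ∈ centralizer (baerNorm G : Set G) := by
  refine mem_centralizer_iff.2 fun k hk => ?_
  have hg := commute_commutatorElement_pow_orderOf hk g x
  have hx := commute_commutatorElement_swap (commute_commutatorElement_pow_orderOf hk x g)
  have hbezout : k = (k ^ orderOf g) ^ (orderOf g).gcdA (orderOf x) *
      (k ^ orderOf x) ^ (orderOf g).gcdB (orderOf x) := by
    rw [← zpow_natCast, ← zpow_natCast, ← zpow_mul, ← zpow_mul, ← zpow_add, ← Nat.gcd_eq_gcd_ab,
      hgx.gcd_eq_one, Nat.cast_one, zpow_one]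
  rw [hbezout]
  exact ((hg.zpow_right _).mul_right (hx.zpow_right _)).symm.eq

theorem commutatorElement_pow_orderOf_mul_self {g x : G} (hc : ⁅g, x⁆ ∈ baerNorm G) :
    ⁅g, x⁆ ^ (orderOf x * orderOf x) = 1 := by
  set c := ⁅g, x⁆ with hcd
  set n := orderOf x
  have hc_c : Commute ⁅c, x⁆ c := commute_commutatorElement_swap
    (commute_commutatorElement_right hc x)
  have hc_x : Commute ⁅c, x⁆ x := commute_commutatorElement_swap
    (commute_commutatorElement_left hc x)
  have hcx : (c * x) ^ n = 1 := by
    rw [hcd, commutatorElement_def, inv_mul_cancel_right, conj_pow, pow_orderOf_eq_one]; simp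
  have hcn : ⁅c, x⁆ ^ n.choose 2 = c ^ n := by
    simpa [n, hcx, pow_orderOf_eq_one] using mul_pow_mul_commutatorElement_pow_choose hc_c hc_x n
  rw [pow_mul, ← hcn, ← pow_mul, mul_comm, pow_mul, ← commutatorElement_pow_right hc_x,
    pow_orderOf_eq_one, commutatorElement_one_right, one_pow]

theorem commute_of_coprime_orderOf
    (hle : centralizer (baerNorm G : Set G) ≤ baerNorm G) {g x : G}
    (hgx : (orderOf g).Coprime (orderOf x)) : Commute g x := by
  rw [← commutatorElement_eq_one_iff_commute, ← pow_one ⁅g, x⁆,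
    ← ((hgx.mul_left hgx).mul_right (hgx.mul_left hgx)).gcd_eq_one]
  refine pow_gcd_eq_one.2 ⟨?_, commutatorElement_pow_orderOf_mul_self
    (hle (commutatorElement_mem_centralizer hgx))⟩
  rw [← commutatorElement_inv, inv_pow, commutatorElement_pow_orderOf_mul_self
    (hle (commutatorElement_mem_centralizer hgx.symm)), inv_one]

end baerNorm

/-- `H` is a base of size one for the action of `Aut(G)` on the set of subgroups of `G`: every
automorphism of `G` which fixes `H` setwise is a power automorphism. -/
def IsSubgroupBase (H : Subgroup G) : Prop :=
  ∀ α : MulAut G, H.map α.toMonoidHom = H → ∀ x : G, α x ∈ zpowers x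

namespace IsSubgroupBase

variable {H : Subgroup G}

theorem bot_of_top (h : IsSubgroupBase (⊤ : Subgroup G)) : IsSubgroupBase (⊥ : Subgroup G) :=
  fun α _ x => h α (map_top_of_surjective _ α.surjective) x

variable [Finite G] (hH : IsSubgroupBase H)
include hH

theorem apply_mem_zpowers {σ : G →* G} (hσ : Function.Injective σ) (hσH : ∀ h ∈ H, σ h ∈ H)
    (x : G) : σ x ∈ zpowers x := by
  let α : MulAut G := MulEquiv.ofBijective σ (Finite.injective_iff_bijective.1 hσ)
  have hle : H.map α.toMonoidHom ≤ H := map_le_iff_le_comap.2 hσH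
  refine hH α (eq_of_le_of_card_ge hle ?_) x
  rw [Nat.card_congr (H.equivMapOfInjective α.toMonoidHom α.injective).toEquiv]

theorem normalizer_le_baerNorm : normalizer (H : Set G) ≤ baerNorm G := fun k hk =>
  mem_baerNorm_iff_conj_mem_zpowers.2 fun x =>
    hH (MulAut.conj k) (mem_normalizer_iff_map_conj_eq.1 hk) x

theorem le_baerNorm : H ≤ baerNorm G := le_normalizer.trans hH.normalizer_le_baerNorm

theorem centralizer_le_baerNorm : centralizer (H : Set G) ≤ baerNorm G :=
  (centralizer_le_normalizer _).trans hH.normalizer_le_baerNorm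

theorem centralizer_baerNorm_le : centralizer (baerNorm G : Set G) ≤ centralizer (H : Set G) :=
  centralizer_le hH.le_baerNorm

theorem commute_of_coprime_orderOf {g x : G} (hgx : (orderOf g).Coprime (orderOf x)) :
    Commute g x :=
  baerNorm.commute_of_coprime_orderOf
    (hH.centralizer_baerNorm_le.trans hH.centralizer_le_baerNorm) hgx

theorem mem_zpowers_of_mul_pow_eq_pow {p : ℕ} [Fact p.Prime] (hG : IsPGroup p G)
    {N : Subgroup G} [N.Normal] (hHN : H ≤ N) {x c : G} (hsup : N ⊔ zpowers x = ⊤) (hx : x ∉ N)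
    (hc : c ∈ N) (hcN : c ∈ centralizer (N : Set G)) (hpow : (x * c) ^ p = x ^ p) :
    c ∈ zpowers x := by
  obtain ⟨σ, hσN, hσx⟩ := exists_monoidHom_of_conj_eq_conj (y := x * c) hsup
    (fun n hn => by
      rw [mul_assoc x c n, ← mem_centralizer_iff.1 hcN n hn]; group)
    (fun i hi => by
      obtain ⟨j, rfl⟩ := prime_dvd_of_zpow_mem hG hx hi
      rw [zpow_mul, zpow_natCast, hpow, zpow_mul, zpow_natCast])
  have hsurj : Function.Surjective σ := by
    rw [← MonoidHom.range_eq_top, ← top_le_iff, ← hsup, sup_le_iff, zpowers_le]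
    have hN : N ≤ σ.range := fun n hn => ⟨n, hσN n hn⟩
    refine ⟨hN, ?_⟩
    rw [← mul_inv_cancel_right x c, ← hσx]
    exact mul_mem ⟨x, rfl⟩ (inv_mem (hN hc))
  have h := hH.apply_mem_zpowers (Finite.injective_iff_surjective.2 hsurj)
    (fun h hh => (hσN h (hHN hh)).symm ▸ hh) x
  rw [hσx] at h
  simpa using mul_mem (inv_mem (mem_zpowers x)) h

end IsSubgroupBase

/-! ### Cyclicity criteria for `p`-groups -/

theorem commute_of_pow_mem_zpowers_pow [Finite G] {p : ℕ}
    (hO : ∀ y : G, y ^ p = 1 → y ∈ center G)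
    (hS : ∀ c ∈ center G, c ^ p = 1 → ∃ s ∈ center G, s ^ p = c ^ p.choose 2)
    {x t : G} (hc : ⁅x, t⁆ ∈ center G)
    (hcp : ⁅x, t⁆ ^ p = 1) (hxt : x ^ p ∈ zpowers (t ^ p)) : Commute x t := by
  have hcomm (g : G) : Commute ⁅x, t⁆ g := (mem_center_iff.1 hc g).symm
  obtain ⟨n, hn⟩ := mem_powers_iff_mem_zpowers.2 (inv_mem hxt)
  have hd : ⁅x, t ^ n⁆ = ⁅x, t⁆ ^ n := commutatorElement_pow_right (hcomm t) n
  have hdcomm (g : G) : Commute ⁅x, t ^ n⁆ g := hd ▸ (hcomm g).pow_left n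
  -- `s` cancels the factor `⁅x, t ^ n⁆ ^ p.choose 2` by which `(x * t ^ n) ^ p` differs from `1`.
  obtain ⟨s, hs, hsp⟩ := hS ⁅x, t ^ n⁆ (hd ▸ pow_mem hc n) (by
    rw [hd, ← pow_mul, mul_comm, pow_mul, hcp, one_pow])
  have hscomm (g : G) : Commute s g := (mem_center_iff.1 hs g).symm
  have hpow : (x * t ^ n * s) ^ p = 1 := by
    rw [(hscomm _).symm.mul_pow, hsp,
      mul_pow_mul_commutatorElement_pow_choose (hdcomm x) (hdcomm _), ← pow_mul, mul_comm n p,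
      pow_mul]
    exact mul_eq_one_iff_eq_inv.2 (inv_eq_iff_eq_inv.1 hn.symm)
  have hcent : Commute (x * t ^ n * s) t := (mem_center_iff.1 (hO _ hpow) t).symm
  have hxtn : Commute (x * t ^ n) t := by simpa using hcent.mul_left (hscomm t).inv_left
  simpa using hxtn.mul_left ((Commute.refl t).pow_left n).inv_left

section PGroup

variable {p : ℕ} [Fact p.Prime]

theorem mem_zpowers_of_commute_of_pow_eq_one
    (hU : ∀ y z : G, y ^ p = 1 → orderOf z = p → y ∈ zpowers z) {n : ℕ} {a b : G}
    (hab : Commute a b) (ha : a ^ p ^ n = 1) (hb : orderOf b = p ^ n) : a ∈ zpowers b := by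
  induction n generalizing a b with
  | zero => simp_all
  | succ n ih =>
    have hp := (Fact.out : p.Prime)
    have horder : orderOf (b ^ p) = p ^ n := by
      rw [orderOf_pow_of_dvd hp.ne_zero (hb ▸ dvd_pow_self p n.succ_ne_zero), hb, pow_succ,
        Nat.mul_div_cancel _ hp.pos]
    obtain ⟨i, hi⟩ := mem_zpowers_iff.1 <|
      ih (hab.pow_pow p p) (by rwa [← pow_mul, ← pow_succ']) horder
    have habi : (a * (b ^ i)⁻¹) ^ p = 1 := by
      rw [(hab.zpow_right i).inv_right.mul_pow, ← hi, inv_pow, ← zpow_natCast b, ← zpow_natCast,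
        zpow_comm, mul_inv_cancel]
    have hroot : orderOf (b ^ p ^ n) = p := by
      rw [orderOf_pow_of_dvd (pow_ne_zero n hp.ne_zero) (hb ▸ pow_dvd_pow p n.le_succ), hb,
        pow_succ, Nat.mul_div_cancel_left _ (pow_pos hp.pos n)]
    have hmem : a * (b ^ i)⁻¹ ∈ zpowers b :=
      zpowers_le.2 (pow_mem (mem_zpowers b) _) (hU _ _ habi hroot)
    simpa using mul_mem hmem (zpow_mem (mem_zpowers b) i)

theorem mem_zpowers_of_commute_of_orderOf_le (hG : IsPGroup p G)
    (hU : ∀ y z : G, y ^ p = 1 → orderOf z = p → y ∈ zpowers z) {a b : G}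
    (hab : Commute a b) (hle : orderOf a ≤ orderOf b) : a ∈ zpowers b := by
  obtain ⟨m, hm⟩ := IsPGroup.iff_orderOf.1 hG a
  obtain ⟨n, hn⟩ := IsPGroup.iff_orderOf.1 hG b
  refine mem_zpowers_of_commute_of_pow_eq_one hU hab (orderOf_dvd_iff_pow_eq_one.1 ?_) hn
  rw [hm, hn] at hle
  exact hm ▸ pow_dvd_pow p ((Nat.pow_le_pow_iff_right (Fact.out : p.Prime).one_lt).1 hle)

theorem isCyclic_of_forall_commute [Finite G] (hG : IsPGroup p G)
    (hU : ∀ y z : G, y ^ p = 1 → orderOf z = p → y ∈ zpowers z)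
    (hcomm : ∀ a b : G, Commute a b) : IsCyclic G := by
  obtain ⟨g, hg⟩ := Finite.exists_max (orderOf : G → ℕ)
  exact ⟨g, fun a => mem_zpowers_of_commute_of_orderOf_le hG hU (hcomm a g) (hg a)⟩

theorem exists_notMem_center_commutatorElement_mem_center [Finite G] (hG : IsPGroup p G)
    (hcomm : center G ≠ ⊤) : ∃ t ∉ center G, ∀ x : G, ⁅x, t⁆ ∈ center G := by
  have : Nontrivial (G ⧸ center G) := QuotientGroup.nontrivial_iff.2 hcomm
  obtain ⟨q, hq, hq1⟩ :=
    (nontrivial_iff_exists_ne_one _).1 (hG.to_quotient (center G)).center_nontrivial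
  obtain ⟨t, rfl⟩ := QuotientGroup.mk_surjective q
  refine ⟨t, fun ht => hq1 ((QuotientGroup.eq_one_iff t).2 ht), fun x => ?_⟩
  rw [← QuotientGroup.eq_one_iff]
  exact commutatorElement_eq_one_iff_mul_comm.2 (mem_center_iff.1 hq x)

theorem exists_mem_mem_center_orderOf_eq_prime [Finite G] (hG : IsPGroup p G) {N : Subgroup G}
    [N.Normal] (hN : N ≠ ⊥) : ∃ w ∈ N, w ∈ center G ∧ orderOf w = p := by
  have : Nontrivial N := N.nontrivial_iff_ne_bot.2 hN
  have hdvd : p ∣ Nat.card N := by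
    obtain ⟨n, hn0, hn⟩ := (hG.to_subgroup N).nontrivial_iff_card.1 inferInstance
    exact hn ▸ dvd_pow_self p hn0.ne'
  obtain ⟨c, hc, hc1⟩ :=
    (hG.of_equiv ConjAct.toConjAct).exists_fixed_point_of_prime_dvd_card_of_fixed_point N hdvd
      (a := 1) fun g => smul_one g
  have hcent : (c : G) ∈ center G := mem_center_iff.2 fun g =>
    mul_inv_eq_iff_eq_mul.1 (congrArg Subtype.val (hc (ConjAct.toConjAct g)))
  obtain ⟨m, hm⟩ := exists_pow_orderOf_eq_prime hG fun h => hc1.symm (Subtype.ext h)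
  exact ⟨_, pow_mem c.2 _, pow_mem hcent _, hm⟩

theorem isCyclic_of_pow_eq_one_mem_center [Finite G] (hG : IsPGroup p G)
    (hO : ∀ y : G, y ^ p = 1 → y ∈ center G)
    (hS : ∀ c ∈ center G, c ^ p = 1 → ∃ s ∈ center G, s ^ p = c ^ p.choose 2)
    (hU : ∀ y z : G, y ^ p = 1 → orderOf z = p → y ∈ zpowers z) : IsCyclic G := by
  refine isCyclic_of_forall_commute hG hU fun a b => ?_
  suffices hZ : center G = ⊤ from (mem_center_iff.1 (hZ ▸ mem_top a) b).symm
  by_contra hZ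
  obtain ⟨t, ht, htc⟩ := exists_notMem_center_commutatorElement_mem_center hG hZ
  obtain ⟨x, hx⟩ : ∃ x, ⁅x, t⁆ ≠ 1 := by
    by_contra! h
    exact ht (mem_center_iff.2 fun x => commutatorElement_eq_one_iff_mul_comm.1 (h x))
  obtain ⟨m, hm⟩ := exists_pow_orderOf_eq_prime hG hx
  set u := t ^ p ^ m
  have hcomm (g : G) : Commute ⁅x, t⁆ g := (mem_center_iff.1 (htc x) g).symm
  have hxu : ⁅x, u⁆ = ⁅x, t⁆ ^ p ^ m := commutatorElement_pow_right (hcomm t) _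
  have hc : ⁅x, u⁆ ∈ center G := hxu ▸ pow_mem (htc x) _
  have hcp : ⁅x, u⁆ ^ p = 1 := by rw [hxu, ← orderOf_dvd_iff_pow_eq_one, hm]
  have hpow : Commute (x ^ p) (u ^ p) := by
    refine Commute.pow_right (commutatorElement_eq_one_iff_commute.1 ?_) p
    rw [commutatorElement_pow_left (mem_center_iff.1 hc x).symm, hcp]
  have hcomm_xu : Commute x u := by
    rcases le_total (orderOf (x ^ p)) (orderOf (u ^ p)) with hle | hle
    · exact commute_of_pow_mem_zpowers_pow hO hS hc hcp
        (mem_zpowers_of_commute_of_orderOf_le hG hU hpow hle)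
    · rw [← inv_mem_iff, commutatorElement_inv] at hc
      rw [← inv_eq_one, ← inv_pow, commutatorElement_inv] at hcp
      exact (commute_of_pow_mem_zpowers_pow hO hS hc hcp
        (mem_zpowers_of_commute_of_orderOf_le hG hU hpow.symm hle)).symm
  rw [← hxu, commutatorElement_eq_one_iff_commute.2 hcomm_xu, orderOf_one] at hm
  exact (Fact.out : p.Prime).one_lt.ne hm

end PGroup

/-! ### Bases of size one in `p`-groups -/

/-- The homomorphism `g ↦ ⁅g, t⁆` attached to an element `t` of the second centre; its kernel is
the centralizer of `t`. -/
def commutatorHom (t : G) (ht : ∀ g : G, ⁅g, t⁆ ∈ center G) : G →* center G :=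
  MonoidHom.mk' (fun g => ⟨⁅g, t⁆, ht g⟩) fun g h => Subtype.ext <| by
    change ⁅g * h, t⁆ = ⁅g, t⁆ * ⁅h, t⁆
    rw [commutatorElement_mul_left_eq_conj_mul, mem_center_iff.1 (ht h) g,
      mul_inv_cancel_right]
    exact mem_center_iff.1 (ht g) _

theorem mem_ker_commutatorHom {t : G} {ht : ∀ g : G, ⁅g, t⁆ ∈ center G} {g : G} :
    g ∈ (commutatorHom t ht).ker ↔ Commute g t :=
  MonoidHom.mem_ker.trans <| Subtype.ext_iff.trans commutatorElement_eq_one_iff_commute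

theorem ker_sup_zpowers_eq_top {K : Type*} [Group K] (f : G →* K) {x : G}
    (hx : ∀ g, f g ∈ zpowers (f x)) : f.ker ⊔ zpowers x = ⊤ := by
  refine (eq_top_iff' _).2 fun g => ?_
  obtain ⟨j, hj⟩ := mem_zpowers_iff.1 (hx g)
  rw [← inv_mul_cancel_right g (x ^ j)]
  refine mul_mem (mem_sup_left ?_) (mem_sup_right (zpow_mem (mem_zpowers x) j))
  rw [MonoidHom.mem_ker, map_mul, map_inv, map_zpow, hj, mul_inv_cancel]

theorem exists_normal_isCoatom [Finite G] {p : ℕ} [Fact p.Prime] (hG : IsPGroup p G)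
    {H : Subgroup G} (hH : H ≠ ⊤) : ∃ N : Subgroup G, N.Normal ∧ IsCoatom N ∧ H ≤ N := by
  obtain ⟨N, hN, hHN⟩ := (eq_top_or_exists_le_coatom H).resolve_left hH
  exact ⟨N, (Group.isNilpotent_of_finite_tfae.out 0 2 rfl rfl).1 hG.isNilpotent N hN, hN, hHN⟩

namespace IsSubgroupBase

variable [Finite G] {H : Subgroup G} {p : ℕ} [Fact p.Prime] (hH : IsSubgroupBase H)
  (hG : IsPGroup p G) (hne : H ≠ ⊤)
include hH hG hne

theorem mem_zpowers_of_mem_center {y z : G} (hy : y ∈ center G) (hyp : y ^ p = 1)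
    (hz : z ∈ center G) (hzp : orderOf z = p) : y ∈ zpowers z := by
  have hp : p.Prime := Fact.out
  have one_of_order {w : G} (hw : orderOf w = p) : w ^ p = 1 ∧ w ≠ 1 :=
    ⟨hw ▸ pow_orderOf_eq_one w, fun h => hp.one_lt.ne (by rw [← hw, h, orderOf_one])⟩
  obtain ⟨N, hNn, hNc, hHN⟩ := exists_normal_isCoatom hG hne
  have hsup {x : G} (hx : x ∉ N) : N ⊔ zpowers x = ⊤ :=
    hNc.2 _ (left_lt_sup.2 (mt zpowers_le.1 hx))
  obtain ⟨x₀, hx₀⟩ : ∃ x, x ∉ N := by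
    by_contra! h
    exact hNc.1 ((eq_top_iff' N).2 h)
  obtain ⟨hzp', hz1⟩ := one_of_order hzp
  rcases eq_or_ne N ⊥ with rfl | hN
  · have htop (g : G) : g ∈ zpowers x₀ := by simpa using (eq_top_iff' _).1 (hsup hx₀) g
    exact mem_zpowers_of_pow_prime_eq_one (htop y) (htop z) hyp hzp' hz1
  have hmem {c x : G} (hx : x ∉ N) (hc : c ∈ center G) (hcN : c ∈ N) (hcp : c ^ p = 1) :
      c ∈ zpowers x :=
    hH.mem_zpowers_of_mul_pow_eq_pow hG hHN (hsup hx) hx hcN (center_le_centralizer _ hc) <| by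
      rw [Commute.mul_pow (mem_center_iff.1 hc x), hcp, mul_one]
  obtain ⟨w, hwN, hwc, hw⟩ := exists_mem_mem_center_orderOf_eq_prime hG hN
  obtain ⟨hwp, hw1⟩ := one_of_order hw
  have hmem_w {c : G} (hc : c ∈ center G) (hcp : c ^ p = 1) : c ∈ zpowers w := by
    obtain ⟨x, hx, hcx⟩ : ∃ x, x ∉ N ∧ c ∈ zpowers x := by
      by_cases hcN : c ∈ N
      exacts [⟨x₀, hx₀, hmem hx₀ hc hcN hcp⟩, ⟨c, hcN, mem_zpowers c⟩]
    exact mem_zpowers_of_pow_prime_eq_one hcx (hmem hx hwc hwN hwp) hcp hwp hw1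
  exact mem_zpowers_of_pow_prime_eq_one (hmem_w hy hyp) (hmem_w hz hzp') hyp hzp' hz1

theorem commute_of_mul_pow_eq_pow {x t : G} (ht : t ∈ centralizer (H : Set G))
    (htp : t ^ p ∈ center G) (hxt : (x * t) ^ p = x ^ p) : Commute x t := by
  have htn := hH.centralizer_le_baerNorm ht
  have hpow := baerNorm.commutatorElement_pow_eq_one htn htp
  have hcent := baerNorm.commutatorElement_mem_center htn htp
  by_contra hxt'
  have hc : orderOf ⁅x, t⁆ = p :=
    orderOf_eq_prime (hpow x) (mt commutatorElement_eq_one_iff_commute.1 hxt')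
  let f := commutatorHom t hcent
  have hsup : f.ker ⊔ zpowers x = ⊤ := ker_sup_zpowers_eq_top f fun g => by
    obtain ⟨j, hj⟩ := hH.mem_zpowers_of_mem_center hG hne (hcent g) (hpow g) (hcent x) hc
    exact ⟨j, Subtype.ext hj⟩
  have htx : t ∈ zpowers x := hH.mem_zpowers_of_mul_pow_eq_pow hG
    (fun h hh => mem_ker_commutatorHom.2 (mem_centralizer_iff.1 ht h hh)) hsup
    (mt mem_ker_commutatorHom.1 hxt') (mem_ker_commutatorHom.2 (Commute.refl t))
    (mem_centralizer_iff.2 fun g hg => mem_ker_commutatorHom.1 hg) hxt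
  exact hxt' (commute_of_mem_zpowers htx (Commute.refl x)).symm

theorem mem_center_of_pow_eq_one
    (hS : ∀ c ∈ center G, c ^ p = 1 → ∃ s ∈ center G, s ^ p = c ^ p.choose 2)
    {y : G} (hy : y ^ p = 1) : y ∈ center G := by
  have hyH := hH.centralizer_baerNorm_le (baerNorm.mem_centralizer_of_pow_prime_eq_one hy)
  have hyn := hH.centralizer_le_baerNorm hyH
  have hyp : y ^ p ∈ center G := hy ▸ one_mem _
  refine mem_center_iff.2 fun x => ?_
  obtain ⟨s, hs, hsp⟩ := hS _ (baerNorm.commutatorElement_mem_center hyn hyp x)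
    (baerNorm.commutatorElement_pow_eq_one hyn hyp x)
  have hscomm (g : G) : Commute g s := mem_center_iff.1 hs g
  have hys : (y * s) ^ p = s ^ p := by rw [(hscomm y).mul_pow, hy, one_mul]
  have hxys : (x * (y * s)) ^ p = x ^ p := by
    rw [← mul_assoc, (hscomm _).mul_pow, hsp,
      baerNorm.mul_pow_mul_commutatorElement_pow hyn x, hy, mul_one]
  have hcomm : Commute x (y * s) := hH.commute_of_mul_pow_eq_pow hG hne
    (mul_mem hyH (center_le_centralizer _ hs)) (hys ▸ pow_mem hs p) hxys
  have h := hcomm.mul_right (hscomm x).inv_right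
  rwa [mul_inv_cancel_right] at h

theorem isCyclic_of_exists_pow_eq_pow_choose
    (hS : ∀ c ∈ center G, c ^ p = 1 → ∃ s ∈ center G, s ^ p = c ^ p.choose 2) : IsCyclic G := by
  have hO {y : G} : y ^ p = 1 → y ∈ center G := hH.mem_center_of_pow_eq_one hG hne hS
  refine isCyclic_of_pow_eq_one_mem_center hG (fun _ => hO) hS fun y z hy hz => ?_
  exact hH.mem_zpowers_of_mem_center hG hne (hO hy) hy
    (hO (hz ▸ pow_orderOf_eq_one z)) hz

end IsSubgroupBase

theorem eq_one_or_eq_of_mem_zpowers {y z : G} (hz : z ^ 2 = 1) (hy : y ∈ zpowers z) :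
    y = 1 ∨ y = z := by
  obtain ⟨i, rfl⟩ := mem_zpowers_iff.1 hy
  have hz' : z ^ (2 : ℤ) = 1 := mod_cast hz
  obtain ⟨j, rfl | rfl⟩ := i.even_or_odd'
  · exact .inl (by rw [zpow_mul, hz', one_zpow])
  · exact .inr (by rw [zpow_add, zpow_mul, hz', one_zpow, one_mul, zpow_one])

theorem eq_one_or_eq_or_sq_eq (hG : IsPGroup 2 G) {z : G} (h4 : ∀ w : G, w ^ 4 ≠ z) {x : G}
    (hx : ∀ m : ℕ, orderOf (x ^ 2 ^ m) = 2 → x ^ 2 ^ m = z) : x = 1 ∨ x = z ∨ x ^ 2 = z := by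
  refine or_iff_not_imp_left.2 fun hx1 => ?_
  obtain ⟨m, hm⟩ := exists_pow_orderOf_eq_prime hG hx1
  have hz := hx m hm
  match m with
  | 0 => exact .inl (by simpa using hz)
  | 1 => exact .inr (by simpa using hz)
  | m + 2 => exact absurd (by rw [← hz, ← pow_mul, pow_add]; rfl) (h4 (x ^ 2 ^ m))

theorem eq_top_of_not_commute {z : G} (hz : z ∈ center G) (hz2 : orderOf z = 2)
    (hex : ∀ x : G, x = 1 ∨ x = z ∨ x ^ 2 = z) {L : Subgroup G} {a b : G} (ha : a ∈ L)
    (hb : b ∈ L) (hab : ¬Commute a b) : L = ⊤ := by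
  have hzcomm (g : G) : Commute g z := mem_center_iff.1 hz g
  have hsq {x g : G} (hxg : ¬Commute x g) : x ^ 2 = z := by
    rcases hex x with rfl | rfl | h
    exacts [absurd (Commute.one_left g) hxg, absurd (hzcomm g).symm hxg, h]
  have haz : a ^ 2 = z := hsq hab
  have hzL : z ∈ L := haz ▸ pow_mem ha 2
  have hmem {g : G} (hg : Commute g a) : g ∈ L := by
    rcases hex g with rfl | rfl | hgz
    · exact one_mem L
    · exact hzL
    have hga : (g * a) ^ 2 = 1 := by
      rw [hg.mul_pow, hgz, haz, ← pow_two, ← hz2, pow_orderOf_eq_one]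
    have hgaL : g * a ∈ L := by
      rcases hex (g * a) with h | h | h
      · exact h ▸ one_mem L
      · exact h ▸ hzL
      · rw [← h, hga, orderOf_one] at hz2
        exact absurd hz2 (by decide)
    simpa using mul_mem hgaL (inv_mem ha)
  have htwist {x : G} (hx : ¬Commute x a) : a * x * a = x := by
    have h : (x * a) ^ 2 = x ^ 2 := by
      rw [hsq hx, hsq (g := a) fun h => hx (by simpa using h.mul_left (Commute.refl a).inv_left)]
    rw [pow_two, pow_two, mul_assoc] at h
    simpa [mul_assoc] using mul_left_cancel h
  refine (eq_top_iff' L).2 fun g => ?_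
  by_cases hg : Commute g a
  · exact hmem hg
  · have hgb : Commute (g * b) a := by
      have hb' := htwist fun h => hab h.symm
      calc g * b * a = (a * g * a) * b * a := by rw [htwist hg]
        _ = a * g * (a * b * a) := by group
        _ = a * (g * b) := by rw [hb', mul_assoc]
    simpa using mul_mem (hmem hgb) (inv_mem hb)

namespace IsSubgroupBase

section TwoGroup

variable [Finite G] {H : Subgroup G} (hH : IsSubgroupBase H) (hG : IsPGroup 2 G) (hne : H ≠ ⊤)
  {z : G} (hz : z ∈ center G) (hz2 : orderOf z = 2) (hsq : ∀ s ∈ center G, s ^ 2 ≠ z)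
include hH hG hne hz hz2

theorem eq_of_mem_center_of_orderOf_eq_two {y : G} (hy : y ∈ center G) (hy2 : orderOf y = 2) :
    y = z := by
  have hyz := hH.mem_zpowers_of_mem_center hG hne hy (hy2 ▸ pow_orderOf_eq_one y) hz hz2
  refine (eq_one_or_eq_of_mem_zpowers (hz2 ▸ pow_orderOf_eq_one z) hyz).resolve_left ?_
  rintro rfl
  simp at hy2

theorem commutatorElement_eq_of_not_commute {x t : G} (ht : t ∈ baerNorm G)
    (htc : t ^ 2 ∈ center G) (hxt : ¬Commute x t) : ⁅x, t⁆ = z :=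
  hH.eq_of_mem_center_of_orderOf_eq_two hG hne hz hz2
    (baerNorm.commutatorElement_mem_center ht htc x)
    (orderOf_eq_prime (baerNorm.commutatorElement_pow_eq_one ht htc x)
      (mt commutatorElement_eq_one_iff_commute.1 hxt))

include hsq

theorem sq_ne_of_mem_centralizer {t : G} (ht : t ∈ centralizer (H : Set G)) : t ^ 2 ≠ z := by
  intro htz
  have htn := hH.centralizer_le_baerNorm ht
  have htc : t ^ 2 ∈ center G := htz ▸ hz
  refine hsq t (mem_center_iff.2 fun x => ?_) htz
  by_contra hxt
  have hc := hH.commutatorElement_eq_of_not_commute hG hne hz hz2 htn htc hxt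
  have hpow := baerNorm.mul_pow_mul_commutatorElement_pow htn x 2
  rw [hc, Nat.choose_self, pow_one, htz] at hpow
  exact hxt (hH.commute_of_mul_pow_eq_pow hG hne ht htc (mul_right_cancel hpow)).eq

theorem pow_four_ne (w : G) : w ^ 4 ≠ z := by
  intro hw
  have hord : orderOf w = 2 ^ 3 := by
    refine orderOf_eq_prime_pow ?_ ?_
    · rw [show 2 ^ 2 = 4 by rfl, hw]
      rintro rfl
      simp at hz2
    · rw [show 2 ^ (2 + 1) = 4 * 2 by rfl, pow_mul, hw, ← hz2, pow_orderOf_eq_one]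
  refine hH.sq_ne_of_mem_centralizer hG hne hz hz2 hsq (t := w ^ 2)
    (hH.centralizer_baerNorm_le <| mem_centralizer_iff.2 fun k hk => ?_) (by rwa [← pow_mul])
  obtain ⟨i, hi : w ^ i = ⁅w, k⁆⟩ :=
    mem_powers_iff_mem_zpowers.2 (baerNorm.commutatorElement_mem_zpowers hk w)
  have hleft (n : ℕ) : ⁅w ^ n, k⁆ = w ^ (i * n) := by
    rw [commutatorElement_pow_left (baerNorm.commute_commutatorElement_left hk w), ← hi, pow_mul]
  have hi2 : 2 ^ 3 ∣ i * i := by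
    rw [← hord, orderOf_dvd_iff_pow_eq_one, ← hleft, hi, commutatorElement_eq_one_iff_commute]
    exact baerNorm.commute_commutatorElement_right hk w
  have h2i : 2 ^ 3 ∣ i * 2 := by
    rw [← CharP.cast_eq_zero_iff (ZMod (2 ^ 3))] at hi2 ⊢
    push_cast at hi2 ⊢
    generalize (i : ZMod (2 ^ 3)) = j at hi2 ⊢
    revert j
    decide
  rw [← hord, orderOf_dvd_iff_pow_eq_one, ← hleft] at h2i
  exact (commutatorElement_eq_one_iff_mul_comm.1 h2i).symm

theorem mem_center_of_sq_eq_one {y : G} (hy : y ^ 2 = 1) : y ∈ center G := by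
  have hyn := hH.centralizer_le_baerNorm <| hH.centralizer_baerNorm_le <|
    baerNorm.mem_centralizer_of_pow_prime_eq_one hy
  have hyc : y ^ 2 ∈ center G := hy ▸ one_mem _
  have hz1 : z ^ 2 = 1 := hz2 ▸ pow_orderOf_eq_one z
  have hz0 : z ≠ 1 := by rintro rfl; simp at hz2
  refine mem_center_iff.2 fun x => ?_
  by_contra hxy
  have hc := hH.commutatorElement_eq_of_not_commute hG hne hz hz2 hyn hyc hxy
  have hzx : z ∈ zpowers x := hc ▸ baerNorm.commutatorElement_mem_zpowers hyn x
  have hxz : x = 1 ∨ x = z ∨ x ^ 2 = z :=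
    eq_one_or_eq_or_sq_eq hG (hH.pow_four_ne hG hne hz hz2 hsq) fun m hm => by
      have hmem : x ^ 2 ^ m ∈ zpowers z := mem_zpowers_of_pow_prime_eq_one (p := 2)
        (pow_mem (mem_zpowers x) _) hzx (orderOf_dvd_iff_pow_eq_one.1 hm.dvd) hz1 hz0
      refine (eq_one_or_eq_of_mem_zpowers hz1 hmem).resolve_left fun h => ?_
      simp [h] at hm
  have hxz2 : x ^ 2 = z := by
    rcases hxz with rfl | rfl | h
    exacts [absurd (by simp) hxy, absurd (mem_center_iff.1 hz y).symm hxy, h]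
  have hpow := baerNorm.mul_pow_mul_commutatorElement_pow hyn x 2
  rw [hc, Nat.choose_self, pow_one, hxz2, hy, mul_one, mul_eq_right] at hpow
  have hcomm : Commute y (x * y) :=
    mem_centralizer_iff.1 (baerNorm.mem_centralizer_of_pow_prime_eq_one hpow) y hyn
  have h := hcomm.mul_right (Commute.refl y).inv_right
  rw [mul_inv_cancel_right] at h
  exact hxy h.symm.eq

theorem isCyclic_of_forall_sq_ne : IsCyclic G := by
  have h4 := hH.pow_four_ne hG hne hz hz2 hsq
  have hex (x : G) : x = 1 ∨ x = z ∨ x ^ 2 = z := eq_one_or_eq_or_sq_eq hG h4 fun m hm =>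
    hH.eq_of_mem_center_of_orderOf_eq_two hG hne hz hz2
      (hH.mem_center_of_sq_eq_one hG hne hz hz2 hsq (orderOf_dvd_iff_pow_eq_one.1 hm.dvd)) hm
  have hcent {t : G} (ht : t ∈ centralizer (H : Set G)) : t ∈ zpowers z := by
    rcases hex t with rfl | rfl | h
    exacts [one_mem _, mem_zpowers t,
      absurd h (hH.sq_ne_of_mem_centralizer hG hne hz hz2 hsq ht)]
  have hHcomm : H ≤ centralizer (H : Set G) := fun a ha => mem_centralizer_iff.2 fun b hb => by
    by_contra hba
    exact hne (eq_top_of_not_commute hz hz2 hex hb ha hba)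
  have hHcent : (H : Set G) ⊆ center G := fun a ha => zpowers_le.2 hz (hcent (hHcomm ha))
  exact ⟨z, fun t => hcent (centralizer_eq_top_iff_subset.2 hHcent ▸ mem_top t)⟩

end TwoGroup

theorem isCyclic_of_isPGroup [Finite G] {H : Subgroup G} (hH : IsSubgroupBase H) {p : ℕ}
    [hp : Fact p.Prime] (hG : IsPGroup p G) : IsCyclic G := by
  wlog hne : H ≠ ⊤ generalizing H
  · rw [not_not.1 hne] at hH
    rcases eq_or_ne (⊥ : Subgroup G) ⊤ with h | h
    · have : Subsingleton G := subsingleton_iff.1 (subsingleton_of_bot_eq_top h)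
      infer_instance
    · exact this hH.bot_of_top h
  by_cases hS : ∀ c ∈ center G, c ^ p = 1 → ∃ s ∈ center G, s ^ p = c ^ p.choose 2
  · exact hH.isCyclic_of_exists_pow_eq_pow_choose hG hne hS
  push Not at hS
  obtain ⟨z, hz, hzp, hs⟩ := hS
  obtain rfl | hp2 := hp.out.eq_two_or_odd'
  · rw [Nat.choose_self, pow_one] at hs
    refine hH.isCyclic_of_forall_sq_ne hG hne hz (orderOf_eq_prime hzp ?_) hs
    rintro rfl
    exact hs 1 (one_mem _) (one_pow 2)
  · obtain ⟨m, hm⟩ := hp.out.dvd_choose_self two_ne_zero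
      (hp.out.two_le.lt_of_ne (by rintro rfl; exact absurd hp2 (by decide)))
    exact absurd (by rw [hm, pow_mul, hzp, one_pow, one_pow]) (hs 1 (one_mem _))

end IsSubgroupBase

/-! ### Reduction to Sylow subgroups -/

theorem fst_one_mem_of_coprime_card {P Q : Type*} [Group P] [Group Q]
    (hPQ : (Nat.card P).Coprime (Nat.card Q)) {H : Subgroup (P × Q)} {a : P × Q} (ha : a ∈ H) :
    (a.1, 1) ∈ H := by
  obtain ⟨n, hn1, hn0⟩ := Nat.chineseRemainder hPQ 1 0
  have h1 : a.1 ^ n = a.1 := by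
    simpa using pow_eq_pow_iff_modEq.2 (hn1.of_dvd (orderOf_dvd_natCard a.1))
  have h0 : a.2 ^ n = 1 := by
    simpa using pow_eq_pow_iff_modEq.2 (hn0.of_dvd (orderOf_dvd_natCard a.2))
  have hn : a ^ n = (a.1, 1) := Prod.ext h1 h0
  exact hn ▸ pow_mem ha n

namespace IsSubgroupBase

theorem map_mulEquiv {K : Type*} [Group K] {H : Subgroup G} (hH : IsSubgroupBase H) (e : G ≃* K) :
    IsSubgroupBase (H.map e.toMonoidHom) := fun α hα x => by
  have hstab : H.map ((e.trans α).trans e.symm).toMonoidHom = H := by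
    have h := congrArg (map e.symm.toMonoidHom) hα
    simpa [map_map] using h
  simpa using mem_map_of_mem e.toMonoidHom (hH ((e.trans α).trans e.symm) hstab (e.symm x))

theorem comap_inl {P Q : Type*} [Group P] [Group Q] [Finite P] [Finite Q]
    (hPQ : (Nat.card P).Coprime (Nat.card Q)) {H : Subgroup (P × Q)} (hH : IsSubgroupBase H) :
    IsSubgroupBase (H.comap (MonoidHom.inl P Q)) := fun α hα x => by
  have hmem {a : P × Q} (ha : a ∈ H) : (α a.1, a.2) ∈ H := by
    have ha1 := fst_one_mem_of_coprime_card hPQ ha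
    have hα1 : α a.1 ∈ H.comap (MonoidHom.inl P Q) :=
      hα ▸ mem_map_of_mem α.toMonoidHom (mem_comap.2 ha1)
    have hα1' : (α a.1, 1) ∈ H := hα1
    simpa [Prod.mul_def] using mul_mem hα1' (mul_mem (inv_mem ha1) ha)
  obtain ⟨n, hn⟩ := hH.apply_mem_zpowers (σ := α.toMonoidHom.prodMap (MonoidHom.id Q))
    (α.injective.prodMap Function.injective_id) (fun _ ha => hmem ha) (x, 1)
  exact ⟨n, congrArg Prod.fst hn⟩

variable [Finite G] {H : Subgroup G} (hH : IsSubgroupBase H)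
include hH

theorem commute_of_coprime_card {A B : Subgroup G} (hAB : (Nat.card A).Coprime (Nat.card B))
    {a b : G} (ha : a ∈ A) (hb : b ∈ B) : Commute a b :=
  hH.commute_of_coprime_orderOf <|
    (hAB.coprime_dvd_left (A.orderOf_dvd_natCard ha)).coprime_dvd_right (B.orderOf_dvd_natCard hb)

variable {p : ℕ} [Fact p.Prime] (P : Sylow p G)

theorem normal_sylow : (P : Subgroup G).Normal := by
  rw [← normalizer_eq_top_iff, ← index_eq_one]
  by_contra hne
  obtain ⟨q, hq, hdvd⟩ := Nat.exists_prime_and_dvd hne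
  have := Fact.mk hq
  obtain rfl | hpq := eq_or_ne p q
  · exact P.not_dvd_index (hdvd.trans (index_dvd_of_le le_normalizer))
  let Q : Sylow q G := default
  have hle : (Q : Subgroup G) ≤ normalizer (P : Set G) :=
    le_trans (fun y hy => mem_centralizer_iff.2 fun x hx =>
      (hH.commute_of_coprime_card (IsPGroup.coprime_card_of_ne p q hpq P Q P.2 Q.2) hx hy).eq)
      (centralizer_le_normalizer _)
  exact Q.not_dvd_index (hdvd.trans (index_dvd_of_le hle))

theorem isCyclic_sylow : IsCyclic P := by
  have := hH.normal_sylow P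
  obtain ⟨Q, hQ⟩ := exists_right_complement'_of_coprime P.card_coprime_index
  have hcop : (Nat.card P).Coprime (Nat.card Q) := hQ.symm.index_eq_card ▸ P.card_coprime_index
  let e : P × Q ≃* G := MulEquiv.ofBijective
    (MonoidHom.noncommCoprod (P : Subgroup G).subtype Q.subtype fun a b =>
      hH.commute_of_coprime_card hcop a.2 b.2) hQ
  exact ((hH.map_mulEquiv e.symm).comap_inl hcop).isCyclic_of_isPGroup P.2

theorem isCyclic : IsCyclic G := by
  have hnil : Group.IsNilpotent G :=
    (Group.isNilpotent_of_finite_tfae.out 0 3 rfl rfl).2 fun p hp P => hH.normal_sylow P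
  have hZ : IsZGroup G := ⟨fun p hp P => have := Fact.mk hp; hH.isCyclic_sylow P⟩
  infer_instance

end IsSubgroupBase

end

/-- The base size of the action of `Aut(R)` on the set of subgroups of a finite
group `R` is `1` (i.e. some subgroup `H` has setwise stabilizer consisting only of
power automorphisms) if and only if `R` is cyclic. -/
theorem stmt0 (R : Type*) [Group R] [Finite R] :
    (∃ H : Subgroup R, ∀ α : MulAut R, Subgroup.map α.toMonoidHom H = H →
      ∀ x : R, α x ∈ Subgroup.zpowers x) ↔ IsCyclic R := by
  refine ⟨fun ⟨_, hH⟩ => IsSubgroupBase.isCyclic hH, fun _ => ⟨⊤, fun α _ x => ?_⟩⟩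
  obtain ⟨m, hm⟩ := MonoidHom.map_cyclic α.toMonoidHom
  exact ⟨m, (hm x).symm⟩
end

section
/- Let R be a finite Dedekind group (every subgroup of R is normal in R). If R is not cyclic, then for every subgroup H of R there exists an automorphism α of R with α(H) = H that is not a power automorphism, i.e., α(x) ∉ ⟨x⟩ for some x ∈ R. -/
/-!
If `R` is abelian and not cyclic, then for some prime `p` the subgroup `T = {t | t ^ p = 1}` is not
cyclic. Choose a maximal subgroup `M` containing all `p`-th powers; if `x ↦ x ^ p` is not injective
on `R ⧸ H`, then `M` may be taken above `H`, and otherwise `T ≤ H`. For suitable `x ∉ M` and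
`z ∈ T ⊓ M` outside `⟨x⟩`, let `f` be the homomorphism killing `M` and sending `x` to `z`. Then
`y ↦ y * f y` is the required automorphism.

If `R` is not abelian, every subgroup not contained in the center has a noncentral element `x` of
order `4`: a noncentral `x` with `x ^ p` central and a suitable `g` not commuting with it can be
taken of `p`-power order; unless both have order `4`, and if `orderOf x ≤ orderOf g`,
some `x * g ^ t` has smaller order than `x` and the same commutator with `g`. As `⟨x⟩` is normal,
every element centralizes or inverts `x`, and right multiplication by `x` off the centralizer of `x`
gives an automorphism. It preserves `H` if `x ∈ H` or `H` is central, and sends no `g` off the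
centralizer into `⟨g⟩`.
-/

open Subgroup
open scoped commutatorElement

section Torsion

variable {G : Type*} [Group G] {K : Subgroup G} {x z : G} {p : ℕ}

theorem mem_of_pow_mem_of_coprime {m n : ℕ} (hmn : m.Coprime n) (hm : x ^ m ∈ K)
    (hn : x ^ n ∈ K) : x ∈ K := by
  have hx : x = (x ^ m) ^ m.gcdA n * (x ^ n) ^ m.gcdB n := by
    rw [← zpow_natCast x m, ← zpow_natCast x n, ← zpow_mul, ← zpow_mul, ← zpow_add,
      ← Nat.gcd_eq_gcd_ab, hmn.gcd_eq_one, Nat.cast_one, zpow_one]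
  exact hx ▸ K.mul_mem (K.zpow_mem hm _) (K.zpow_mem hn _)

theorem mem_zpowers_of_pow_prime_eq_one_s5 (hp : p.Prime) (hx : x ^ p = 1) (hz : z ∈ zpowers x)
    (hz1 : z ≠ 1) : x ∈ zpowers z := by
  obtain ⟨i, rfl⟩ := mem_zpowers_iff.mp hz
  have : Fact p.Prime := ⟨hp⟩
  have hx1 : x ≠ 1 := by rintro rfl; exact hz1 (one_zpow i)
  have hxp : orderOf x = p := orderOf_eq_prime hx hx1
  rw [mem_zpowers_zpow_iff, hxp, ← Int.isCoprime_iff_gcd_eq_one, isCoprime_comm]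
  refine (Nat.prime_iff_prime_int.mp hp).coprime_iff_not_dvd.mpr fun hpi ↦ hz1 ?_
  rwa [← orderOf_dvd_iff_zpow_eq_one, hxp]

theorem exists_pow_notMem_pow_prime_mem (hx : IsOfFinOrder x) (hxK : x ∉ K) :
    ∃ p m : ℕ, p.Prime ∧ x ^ m ∉ K ∧ (x ^ m) ^ p ∈ K := by
  suffices ∀ n : ℕ, n ≠ 0 → x ^ n ∈ K → ∃ p m : ℕ, p.Prime ∧ x ^ m ∉ K ∧ (x ^ m) ^ p ∈ K from
    this (orderOf x) hx.orderOf_pos.ne' (pow_orderOf_eq_one x ▸ K.one_mem)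
  intro n
  induction n using induction_on_primes with
  | zero => exact fun h ↦ absurd rfl h
  | one => exact fun _ h ↦ absurd (pow_one x ▸ h) hxK
  | prime_mul p a hp ih =>
    intro hpa hxpa
    by_cases hxa : x ^ a ∈ K
    · exact ih (right_ne_zero_of_mul hpa) hxa
    · exact ⟨p, a, hp, hxa, by rwa [← pow_mul, mul_comm]⟩

theorem exists_pow_notMem_orderOf_eq_prime_pow (hp : p.Prime) (hx : IsOfFinOrder x)
    (hxK : x ∉ K) (hxp : x ^ p ∈ K) : ∃ m k : ℕ, x ^ m ∉ K ∧ orderOf (x ^ m) = p ^ k := by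
  have hx0 : orderOf x ≠ 0 := hx.orderOf_pos.ne'
  refine ⟨orderOf x / p ^ (orderOf x).factorization p, (orderOf x).factorization p, ?_, ?_⟩
  · exact fun h ↦ hxK (mem_of_pow_mem_of_coprime (Nat.coprime_ordCompl hp hx0) hxp h)
  · exact orderOf_pow_orderOf_div hx0 (Nat.ordProj_dvd _ _)

end Torsion

section CommGroup

theorem card_comap_le_card_ker_mul_card {G G' : Type*} [Group G] [Group G'] (f : G →* G')
    (K : Subgroup G') [Finite K] : Nat.card (K.comap f) ≤ Nat.card f.ker * Nat.card K := by
  have hker : f.ker ≤ K.comap f := K.ker_le_comap f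
  rw [← relIndex_bot_left (K.comap f), ← relIndex_mul_relIndex ⊥ f.ker _ bot_le hker,
    relIndex_bot_left, relIndex_ker]
  exact Nat.mul_le_mul_left _ (card_le_of_le (map_comap_le f K))

variable {G : Type*} [CommGroup G]

theorem exists_prime_not_isCyclic_ker_powMonoidHom [Finite G] (hG : ¬ IsCyclic G) :
    ∃ p : ℕ, p.Prime ∧ ¬ IsCyclic (powMonoidHom p : G →* G).ker := by
  contrapose! hG
  have hprime (p : ℕ) (hp : p.Prime) : Nat.card (powMonoidHom p : G →* G).ker ≤ p := by
    have := hG p hp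
    rw [← IsCyclic.exponent_eq_card]
    refine Nat.le_of_dvd hp.pos (Monoid.exponent_dvd_of_forall_pow_eq_one fun t ↦ ?_)
    exact Subtype.ext t.2
  have hcard (n : ℕ) (hn : n ≠ 0) : Nat.card (powMonoidHom n : G →* G).ker ≤ n := by
    induction n using induction_on_primes with
    | zero => exact absurd rfl hn
    | one =>
      have : (powMonoidHom 1 : G →* G).ker = ⊥ := by ext; simp [MonoidHom.mem_ker]
      simp [this]
    | prime_mul p a hp ih =>
      have hcomp : (powMonoidHom (p * a) : G →* G).ker =
          (powMonoidHom a : G →* G).ker.comap (powMonoidHom p) := by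
        ext; simp [MonoidHom.mem_ker, pow_mul]
      rw [hcomp]
      exact (card_comap_le_card_ker_mul_card _ _).trans
        (Nat.mul_le_mul (hprime p hp) (ih (right_ne_zero_of_mul hn)))
  classical
  have := Fintype.ofFinite G
  refine isCyclic_of_card_pow_eq_one_le fun n hn ↦ ?_
  simpa [MonoidHom.mem_ker, Nat.card_eq_fintype_card, Fintype.card_subtype] using hcard n hn.ne'

theorem exists_isCoatom_forall_pow_mem [Finite G] {p : ℕ}
    (hp : ¬ Function.Injective (powMonoidHom p : G →* G)) :
    ∃ M : Subgroup G, IsCoatom M ∧ ∀ y, y ^ p ∈ M := by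
  have hrange : (powMonoidHom p : G →* G).range ≠ ⊤ := by
    rwa [Ne, MonoidHom.range_eq_top, ← Finite.injective_iff_surjective]
  obtain ⟨M, hM, hle⟩ := (eq_top_or_exists_le_coatom _).resolve_left hrange
  exact ⟨M, hM, fun y ↦ hle ⟨y, rfl⟩⟩

theorem exists_isCoatom_forall_pow_mem_le_or_ker_le [Finite G] {p : ℕ}
    (hp : ¬ Function.Injective (powMonoidHom p : G →* G)) (H : Subgroup G) :
    ∃ M : Subgroup G, IsCoatom M ∧ (∀ y, y ^ p ∈ M) ∧
      (H ≤ M ∨ (powMonoidHom p : G →* G).ker ≤ H) := by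
  by_cases hH : Function.Injective (powMonoidHom p : G ⧸ H →* G ⧸ H)
  · obtain ⟨M, hM, hMp⟩ := exists_isCoatom_forall_pow_mem hp
    refine ⟨M, hM, hMp, Or.inr fun t ht ↦ (QuotientGroup.eq_one_iff t).mp (hH ?_)⟩
    have htp : t ^ p = 1 := ht
    simp [← QuotientGroup.mk_pow, htp]
  · obtain ⟨M, hM, hMp⟩ := exists_isCoatom_forall_pow_mem hH
    refine ⟨M.comap (QuotientGroup.mk' H),
      isCoatom_comap_of_surjective (QuotientGroup.mk'_surjective H) hM, fun y ↦ hMp y, Or.inl ?_⟩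
    simpa using (QuotientGroup.mk' H).ker_le_comap M

end CommGroup

section Coatom

variable {G : Type*} [Group G] {M : Subgroup G} [M.Normal] {x : G}

theorem mem_zpowers_mk_of_isCoatom (hM : IsCoatom M) (hx : x ∉ M) (y : G ⧸ M) :
    y ∈ zpowers (x : G ⧸ M) := by
  have hlt : M < (zpowers (x : G ⧸ M)).comap (QuotientGroup.mk' M) := by
    refine SetLike.lt_iff_le_and_exists.mpr ⟨?_, x, mem_zpowers _, hx⟩
    simpa using (QuotientGroup.mk' M).ker_le_comap (zpowers (x : G ⧸ M))
  obtain ⟨g, rfl⟩ := QuotientGroup.mk_surjective y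
  exact (hM.2 _ hlt).ge (mem_top g)

theorem exists_hom_of_isCoatom {G' : Type*} [Group G'] {p : ℕ} (hp : p.Prime)
    (hM : IsCoatom M) (hx : x ∉ M) (hxp : x ^ p ∈ M) {z : G'} (hz : z ^ p = 1) :
    ∃ f : G →* G', M ≤ f.ker ∧ f x = z ∧ f.range ≤ zpowers z := by
  have hgen := mem_zpowers_mk_of_isCoatom hM hx
  have : Fact p.Prime := ⟨hp⟩
  have hord : orderOf (x : G ⧸ M) = p :=
    orderOf_eq_prime ((QuotientGroup.eq_one_iff _).mpr hxp) (mt (QuotientGroup.eq_one_iff x).mp hx)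
  have hdvd : orderOf z ∣ orderOf (x : G ⧸ M) := hord ▸ orderOf_dvd_of_pow_eq_one hz
  let f := monoidHomOfForallMemZpowers hgen hdvd
  have hfx : f x = z := monoidHomOfForallMemZpowers_apply_gen hgen hdvd
  refine ⟨f.comp (QuotientGroup.mk' M), ?_, hfx, ?_⟩
  · exact fun y hy ↦ by simp [MonoidHom.mem_ker, (QuotientGroup.eq_one_iff y).mpr hy]
  · rintro _ ⟨y, rfl⟩
    obtain ⟨i, hi⟩ := mem_zpowers_iff.mp (hgen y)
    exact ⟨i, by simp [← hi, hfx]⟩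

theorem exists_notMem_zpowers_of_isCoatom {p : ℕ} (hp : p.Prime) (hM : IsCoatom M)
    {T : Subgroup G} (hT : ¬ IsCyclic T) (hTp : ∀ t ∈ T, t ^ p = 1) :
    ∃ x ∉ M, ∃ z ∈ T ⊓ M, z ∉ zpowers x := by
  by_cases hTM : T ≤ M
  · obtain ⟨x, hx⟩ : ∃ x, x ∉ M := by simpa [eq_top_iff'] using hM.1
    have hTx : ¬ T ≤ zpowers x := fun h ↦ hT (isCyclic_of_le h)
    obtain ⟨z, hzT, hzx⟩ := SetLike.not_le_iff_exists.mp hTx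
    exact ⟨x, hx, z, ⟨hzT, hTM hzT⟩, hzx⟩
  · obtain ⟨x, hxT, hxM⟩ := SetLike.not_le_iff_exists.mp hTM
    have hquot : IsCyclic (G ⧸ M) := ⟨x, mem_zpowers_mk_of_isCoatom hM hxM⟩
    have hinf : T ⊓ M ≠ ⊥ := by
      intro h
      refine hT (isCyclic_of_injective ((QuotientGroup.mk' M).comp T.subtype) ?_)
      rw [← MonoidHom.ker_eq_bot_iff, ← MonoidHom.comap_ker, QuotientGroup.ker_mk',
        ← subgroupOf, subgroupOf_eq_bot, disjoint_iff, inf_comm, h]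
    obtain ⟨z, hz, hz1⟩ := (T ⊓ M).bot_or_exists_ne_one.resolve_left hinf
    refine ⟨x, hxM, z, hz, fun hzx ↦ hxM ?_⟩
    exact zpowers_le.mpr hz.2 (mem_zpowers_of_pow_prime_eq_one_s5 hp (hTp x hxT) hzx hz1)

end Coatom

theorem map_mulAut_eq_of_forall_mem {G : Type*} [Group G] {H : Subgroup G} [Finite H]
    {α : MulAut G} (h : ∀ y ∈ H, α y ∈ H) : H.map α.toMonoidHom = H := by
  refine eq_of_le_of_card_ge (map_le_iff_le_comap.mpr h) ?_
  rw [card_map_of_injective α.injective]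

section Unipotent

variable {G : Type*} [CommGroup G]

/-- The automorphism `y ↦ y * f y` of a commutative group attached to an endomorphism `f` with
`f ∘ f` trivial, a condition encoded as `f.range ≤ f.ker`; its inverse is `y ↦ y / f y`. -/
def unipotentMulAut (f : G →* G) (hf : f.range ≤ f.ker) : MulAut G :=
  (MonoidHom.id G * f).toMulEquiv (MonoidHom.id G / f)
    (by ext y; simp [show f (f y) = 1 from hf ⟨y, rfl⟩])
    (by ext y; simp [show f (f y) = 1 from hf ⟨y, rfl⟩])

theorem unipotentMulAut_apply {f : G →* G} (hf : f.range ≤ f.ker) (y : G) :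
    unipotentMulAut f hf y = y * f y := rfl

theorem exists_mulAut_notMem_zpowers_of_not_isCyclic [Finite G] (hG : ¬ IsCyclic G)
    (H : Subgroup G) : ∃ α : MulAut G, H.map α.toMonoidHom = H ∧ ∃ x : G, α x ∉ zpowers x := by
  obtain ⟨p, hp, hT⟩ := exists_prime_not_isCyclic_ker_powMonoidHom hG
  have hinj : ¬ Function.Injective (powMonoidHom p : G →* G) := fun h ↦ by
    rw [(MonoidHom.ker_eq_bot_iff _).mpr h] at hT
    exact hT inferInstance
  obtain ⟨M, hM, hMp, hMH⟩ := exists_isCoatom_forall_pow_mem_le_or_ker_le hinj H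
  obtain ⟨x, hxM, z, ⟨hzT, hzM⟩, hzx⟩ :=
    exists_notMem_zpowers_of_isCoatom hp hM hT fun _ ht ↦ ht
  obtain ⟨f, hMf, hfx, hfz⟩ := exists_hom_of_isCoatom hp hM hxM (hMp x) hzT
  have hff : f.range ≤ f.ker := hfz.trans (zpowers_le.mpr (hMf hzM))
  refine ⟨unipotentMulAut f hff, map_mulAut_eq_of_forall_mem fun y hy ↦ ?_, x, fun h ↦ hzx ?_⟩
  · refine H.mul_mem hy ?_
    rcases hMH with hHM | hTH
    · exact (show f y = 1 from hMf (hHM hy)) ▸ H.one_mem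
    · exact hTH (zpowers_le.mpr hzT (hfz ⟨y, rfl⟩))
  · rwa [unipotentMulAut_apply, hfx, mul_mem_cancel_left (mem_zpowers x)] at h

end Unipotent

section Commutator

variable {G : Type*} [Group G] {a b : G}

theorem commutatorElement_pow_right_s5 (hb : Commute ⁅a, b⁆ b) (n : ℕ) : ⁅a, b ^ n⁆ = ⁅a, b⁆ ^ n := by
  have hab : SemiconjBy a b (⁅a, b⁆ * b) := by simp [SemiconjBy, commutatorElement_def]
  have hpow : a * b ^ n = ⁅a, b⁆ ^ n * b ^ n * a := by rw [hab.pow_right n, hb.mul_pow]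
  rw [commutatorElement_def, hpow, mul_inv_cancel_right, mul_inv_cancel_right]

theorem commutatorElement_pow_left_s5 (ha : Commute ⁅a, b⁆ a) (n : ℕ) : ⁅a ^ n, b⁆ = ⁅a, b⁆ ^ n := by
  have ha' : Commute ⁅b, a⁆ a := commutatorElement_inv a b ▸ ha.inv_left
  rw [← commutatorElement_inv, commutatorElement_pow_right_s5 ha', ← inv_pow, commutatorElement_inv]

theorem mul_pow_mul_commutatorElement_pow_choose_two (ha : Commute ⁅a, b⁆ a)
    (hb : Commute ⁅a, b⁆ b) (n : ℕ) : (a * b) ^ n * ⁅a, b⁆ ^ n.choose 2 = a ^ n * b ^ n := by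
  induction n with
  | zero => simp
  | succ n ih =>
    have hchoose : (n + 1).choose 2 = n.choose 2 + n := by
      rw [Nat.choose_succ_succ' n 1, Nat.choose_one_right, add_comm]
    have hswap : a ^ n * b = ⁅a, b⁆ ^ n * (b * a ^ n) := by
      rw [← commutatorElement_pow_left_s5 ha]; simp [commutatorElement_def, mul_assoc]
    have hcomm : Commute (⁅a, b⁆ ^ n) (b * a ^ n * b ^ n) :=
      ((hb.mul_right (ha.pow_right n)).mul_right (hb.pow_right n)).pow_left n
    calc (a * b) ^ (n + 1) * ⁅a, b⁆ ^ (n + 1).choose 2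
        = a * b * ((a * b) ^ n * ⁅a, b⁆ ^ n.choose 2) * ⁅a, b⁆ ^ n := by
          rw [hchoose, pow_succ', pow_add]; simp only [mul_assoc]
      _ = a * (b * a ^ n * b ^ n * ⁅a, b⁆ ^ n) := by rw [ih]; simp only [mul_assoc]
      _ = a * (a ^ n * b * b ^ n) := by rw [← hcomm.eq, hswap]; simp only [mul_assoc]
      _ = a ^ (n + 1) * b ^ (n + 1) := by rw [pow_succ' a, pow_succ' b]; simp only [mul_assoc]

theorem commutatorElement_mem_zpowers_left [(zpowers a).Normal] : ⁅a, b⁆ ∈ zpowers a :=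
  commutator_le_left _ (zpowers b) (commutator_mem_commutator (mem_zpowers a) (mem_zpowers b))

theorem commutatorElement_mem_zpowers_right [(zpowers b).Normal] : ⁅a, b⁆ ∈ zpowers b :=
  commutator_le_right (zpowers a) _ (commutator_mem_commutator (mem_zpowers a) (mem_zpowers b))

theorem commute_of_mem_zpowers_s5 (h : a ∈ zpowers b) : Commute a b := by
  obtain ⟨i, rfl⟩ := mem_zpowers_iff.mp h
  exact Commute.zpow_self b i

variable {x g c : G} {p k l : ℕ}

theorem zpowers_pow_prime_pow_eq_zpowers (hp : p.Prime) (hx : orderOf x = p ^ (k + 1))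
    (hc : c ∈ zpowers x) (hcp : c ^ p = 1) (hc1 : c ≠ 1) : zpowers (x ^ p ^ k) = zpowers c := by
  have hcx : c ∈ zpowers (x ^ p ^ k) := by
    obtain ⟨i, rfl⟩ := mem_zpowers_iff.mp hc
    rw [← zpow_natCast, ← zpow_mul, ← orderOf_dvd_iff_zpow_eq_one, hx, Nat.cast_pow,
      pow_succ] at hcp
    obtain ⟨j, rfl⟩ := Int.dvd_of_mul_dvd_mul_right (Nat.cast_ne_zero.mpr hp.ne_zero) hcp
    exact ⟨j, by rw [zpow_mul, ← Nat.cast_pow, zpow_natCast]⟩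
  have hxp : (x ^ p ^ k) ^ p = 1 := by rw [← pow_mul, ← pow_succ, ← hx, pow_orderOf_eq_one]
  exact le_antisymm (zpowers_le.mpr (mem_zpowers_of_pow_prime_eq_one_s5 hp hxp hcx hc1))
    (zpowers_le.mpr hcx)

theorem dvd_pow_mul_mul_choose_two {m j : ℕ} (hp : p.Prime)
    (h4 : ¬ (p ^ (k + 1) = 4 ∧ p ^ (k + m + 1) = 4)) : p ∣ p ^ m * j * (p ^ k).choose 2 := by
  rcases eq_or_ne m 0 with rfl | hm
  · refine (hp.dvd_choose_pow two_ne_zero fun h2 ↦ h4 ?_).mul_left _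
    obtain ⟨rfl, rfl⟩ := (Nat.prime_two.pow_eq_iff).mp h2.symm
    norm_num
  · exact ((dvd_pow_self p hm).mul_right j).mul_right _

theorem exists_mul_pow_pow_prime_pow_eq_one (hp : p.Prime) (hkl : k ≤ l)
    (hx : orderOf x = p ^ (k + 1)) (hg : orderOf g = p ^ (l + 1)) (hcx : ⁅x, g⁆ ∈ zpowers x)
    (hcg : ⁅x, g⁆ ∈ zpowers g) (hcp : ⁅x, g⁆ ^ p = 1) (hxg : ¬ Commute x g)
    (h4 : ¬ (p ^ (k + 1) = 4 ∧ p ^ (l + 1) = 4)) : ∃ t : ℕ, (x * g ^ t) ^ p ^ k = 1 := by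
  have hc1 : ⁅x, g⁆ ≠ 1 := mt commutatorElement_eq_one_iff_commute.mp hxg
  have hsocle : zpowers (x ^ p ^ k) = zpowers (g ^ p ^ l) :=
    (zpowers_pow_prime_pow_eq_zpowers hp hx hcx hcp hc1).trans
      (zpowers_pow_prime_pow_eq_zpowers hp hg hcg hcp hc1).symm
  have hgfin : IsOfFinOrder (g ^ p ^ l) :=
    (orderOf_pos_iff.mp (hg ▸ pow_pos hp.pos _)).pow
  obtain ⟨j, hj⟩ : ∃ j : ℕ, (g ^ p ^ l) ^ j = (x ^ p ^ k)⁻¹ :=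
    hgfin.mem_powers_iff_mem_zpowers.mpr (hsocle ▸ inv_mem (mem_zpowers _))
  obtain ⟨m, rfl⟩ := Nat.exists_eq_add_of_le hkl
  -- `g ^ t` is chosen so that its `p ^ k`-th power cancels that of `x`; expanding
  -- `(x * g ^ t) ^ p ^ k` leaves the error term `⁅x, g⁆ ^ (t * (p ^ k).choose 2)`, which is trivial
  -- because `h4` makes `p` divide its exponent.
  refine ⟨p ^ m * j, ?_⟩
  set t := p ^ m * j with ht
  have hgt : (g ^ t) ^ p ^ k = (x ^ p ^ k)⁻¹ := by
    rw [← hj, ← pow_mul, ← pow_mul, ht, pow_add]; ring_nf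
  have hct : ⁅x, g ^ t⁆ = ⁅x, g⁆ ^ t :=
    commutatorElement_pow_right_s5 (commute_of_mem_zpowers_s5 hcg) t
  have hchoose : ⁅x, g ^ t⁆ ^ (p ^ k).choose 2 = 1 := by
    rw [hct, ← pow_mul, ← orderOf_dvd_iff_pow_eq_one]
    exact (orderOf_dvd_of_pow_eq_one hcp).trans (dvd_pow_mul_mul_choose_two hp h4)
  have hcomm : Commute ⁅x, g ^ t⁆ x ∧ Commute ⁅x, g ^ t⁆ (g ^ t) := by
    rw [hct]
    exact ⟨(commute_of_mem_zpowers_s5 hcx).pow_left t,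
      ((commute_of_mem_zpowers_s5 hcg).pow_left t).pow_right t⟩
  have hexp := mul_pow_mul_commutatorElement_pow_choose_two hcomm.1 hcomm.2 (p ^ k)
  rwa [hchoose, mul_one, hgt, mul_inv_cancel] at hexp

theorem commutatorElement_mul_pow_left_self (x g : G) (t : ℕ) : ⁅x * g ^ t, g⁆ = ⁅x, g⁆ := by
  rw [commutatorElement_mul_left_eq_conj_mul,
    commutatorElement_eq_one_iff_commute.mpr (Commute.pow_self g t), mul_one, mul_inv_cancel,
    one_mul]

theorem orderOf_eq_four_of_not_commute_of_le (hG : ∀ H : Subgroup G, H.Normal) (hp : p.Prime)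
    (hkl : k ≤ l) (hx : orderOf x = p ^ k) (hg : orderOf g = p ^ l) (hcp : ⁅x, g⁆ ^ p = 1)
    (hxg : ¬ Commute x g) : orderOf x = 4 ∧ orderOf g = 4 := by
  rw [hx, hg]
  induction k using Nat.strong_induction_on generalizing x with
  | _ k ih =>
    obtain _ | k := k
    · exact absurd (orderOf_eq_one_iff.mp hx ▸ Commute.one_left g) hxg
    obtain ⟨l, rfl⟩ : ∃ l', l = l' + 1 := Nat.exists_eq_succ_of_ne_zero (by lia)
    by_contra h4
    obtain ⟨t, ht⟩ := exists_mul_pow_pow_prime_pow_eq_one hp (by lia) hx hg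
      commutatorElement_mem_zpowers_left commutatorElement_mem_zpowers_right hcp hxg h4
    obtain ⟨k', hk', hxt⟩ := (Nat.dvd_prime_pow hp).mp (orderOf_dvd_of_pow_eq_one ht)
    have hc := commutatorElement_mul_pow_left_self x g t
    have hxtg : ¬ Commute (x * g ^ t) g := by
      rwa [← commutatorElement_eq_one_iff_commute, hc, commutatorElement_eq_one_iff_commute]
    obtain ⟨hk4, hl4⟩ := ih k' (by lia) (by lia) hxt (hc ▸ hcp) hxtg
    have hkl' : k' = l + 1 := Nat.pow_right_injective hp.two_le (hk4.trans hl4.symm)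
    lia

theorem orderOf_eq_four_of_not_commute (hG : ∀ H : Subgroup G, H.Normal) (hp : p.Prime)
    (hx : orderOf x = p ^ k) (hg : orderOf g = p ^ l) (hcp : ⁅x, g⁆ ^ p = 1)
    (hxg : ¬ Commute x g) : orderOf x = 4 := by
  rcases le_total k l with hkl | hlk
  · exact (orderOf_eq_four_of_not_commute_of_le hG hp hkl hx hg hcp hxg).1
  · have hcp' : ⁅g, x⁆ ^ p = 1 := by rw [← commutatorElement_inv, inv_pow, hcp, inv_one]
    exact (orderOf_eq_four_of_not_commute_of_le hG hp hlk hg hx hcp' (mt Commute.symm hxg)).2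

theorem exists_notMem_centralizer_singleton (hx : x ∉ center G) : ∃ g, g ∉ centralizer {x} := by
  contrapose! hx
  exact mem_center_iff.mpr fun g ↦ mem_centralizer_singleton_iff.mp (hx g)

theorem exists_mem_notMem_center_orderOf_eq_four (hG : ∀ H : Subgroup G, H.Normal)
    (htors : IsMulTorsion G) {H : Subgroup G} (hH : ¬ H ≤ center G) :
    ∃ x ∈ H, x ∉ center G ∧ orderOf x = 4 := by
  obtain ⟨y, hyH, hy⟩ := SetLike.not_le_iff_exists.mp hH
  obtain ⟨p, m, hp, hym, hymp⟩ := exists_pow_notMem_pow_prime_mem (htors y) hy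
  obtain ⟨n, k, hx, hxo⟩ := exists_pow_notMem_orderOf_eq_prime_pow hp (htors _) hym hymp
  set x := (y ^ m) ^ n
  have hxp : x ^ p ∈ center G := by
    rw [← pow_mul, mul_comm, pow_mul]
    exact pow_mem hymp n
  have hcp (g : G) : ⁅x, g⁆ ^ p = 1 := by
    rw [← commutatorElement_pow_left_s5 (commute_of_mem_zpowers_s5 commutatorElement_mem_zpowers_left),
      commutatorElement_eq_one_iff_commute]
    exact (mem_center_iff.mp hxp g).symm
  obtain ⟨g, hg⟩ := exists_notMem_centralizer_singleton hx
  have hgp : g ^ p ∈ centralizer {x} := by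
    rw [mem_centralizer_singleton_iff, eq_comm, ← commutatorElement_eq_one_iff_mul_comm,
      commutatorElement_pow_right_s5 (commute_of_mem_zpowers_s5 commutatorElement_mem_zpowers_right), hcp]
  obtain ⟨q, l, hgq, hgo⟩ := exists_pow_notMem_orderOf_eq_prime_pow hp (htors g) hg hgp
  have hxg : ¬ Commute x (g ^ q) := fun h ↦ hgq (mem_centralizer_singleton_iff.mpr h.eq.symm)
  exact ⟨x, pow_mem (pow_mem hyH m) n, hx, orderOf_eq_four_of_not_commute hG hp hxo hgo (hcp _) hxg⟩

end Commutator

section OrderFour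

variable {G : Type*} [Group G] {x : G}

theorem eq_or_eq_inv_of_orderOf_eq_four {y : G} (hx : orderOf x = 4) (hy : orderOf y = 4)
    (hyx : y ∈ zpowers x) : y = x ∨ y = x⁻¹ := by
  classical
  have hfin : IsOfFinOrder x := orderOf_pos_iff.mp (by lia)
  obtain ⟨i, hi, rfl⟩ : ∃ i < 4, x ^ i = y := by
    have := hfin.mem_zpowers_iff_mem_range_orderOf.mp hyx
    simpa [hx] using this
  rw [hfin.orderOf_pow, hx] at hy
  interval_cases i
  · simp at hy
  · exact Or.inl (pow_one x)
  · simp at hy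
  · exact Or.inr (eq_inv_of_mul_eq_one_left (by simpa [hx, pow_succ] using pow_orderOf_eq_one x))

theorem mem_centralizer_or_mul_mul_eq_of_orderOf_eq_four [(zpowers x).Normal]
    (hx : orderOf x = 4) (g : G) : g ∈ centralizer {x} ∨ x * g * x = g := by
  have hconj : g * x * g⁻¹ ∈ zpowers x := Normal.conj_mem ‹_› x (mem_zpowers x) g
  have hord : orderOf (g * x * g⁻¹) = 4 := by
    rw [← MulAut.conj_apply, MulEquiv.orderOf_eq, hx]
  refine (eq_or_eq_inv_of_orderOf_eq_four hx hord hconj).imp ?_ fun h ↦ ?_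
  · exact fun h ↦ mem_centralizer_singleton_iff.mpr (mul_inv_eq_iff_eq_mul.mp h)
  · rw [mul_assoc, mul_inv_eq_iff_eq_mul.mp h, mul_inv_cancel_left]

theorem self_mem_centralizer_singleton (x : G) : x ∈ centralizer {x} :=
  mem_centralizer_singleton_iff.mpr rfl

theorem mul_mem_centralizer_of_mul_mul_eq {a b : G} (ha : x * a * x = a) (hb : x * b * x = b) :
    a * b ∈ centralizer {x} := by
  rw [mem_centralizer_singleton_iff]
  calc a * b * x = x * a * x * b * x := by rw [ha]
    _ = x * a * (x * b * x) := by simp only [mul_assoc]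
    _ = x * (a * b) := by rw [hb, mul_assoc]

open Classical in
/-- If every element of a group commutes with `x` or inverts it by conjugation, then `g ↦ g` on the
centralizer of `x` and `g ↦ g * x` off it define an automorphism. The inversion condition is
written as `x * g * x = g`. -/
noncomputable def mulRightOffCentralizer (x : G)
    (hx : ∀ g, g ∈ centralizer {x} ∨ x * g * x = g) : MulAut G where
  toFun g := if g ∈ centralizer {x} then g else g * x
  invFun g := if g ∈ centralizer {x} then g else g * x⁻¹
  left_inv g := by
    by_cases hg : g ∈ centralizer {x} <;>
      simp [hg, mul_mem_cancel_right (self_mem_centralizer_singleton x)]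
  right_inv g := by
    by_cases hg : g ∈ centralizer {x} <;>
      simp [hg, mul_mem_cancel_right (inv_mem (self_mem_centralizer_singleton x))]
  map_mul' a b := by
    by_cases ha : a ∈ centralizer {x}
    · by_cases hb : b ∈ centralizer {x} <;> simp [ha, hb, mul_mem_cancel_left ha, mul_assoc]
    have hax := (hx a).resolve_left ha
    by_cases hb : b ∈ centralizer {x}
    · have hbx : b * x = x * b := mem_centralizer_singleton_iff.mp hb
      simp [ha, hb, mul_mem_cancel_right hb, mul_assoc, hbx]
    · have hbx := (hx b).resolve_left hb
      calc (if a * b ∈ centralizer {x} then a * b else a * b * x)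
          = a * b := if_pos (mul_mem_centralizer_of_mul_mul_eq hax hbx)
        _ = a * (x * b * x) := by rw [hbx]
        _ = a * x * (b * x) := by simp only [mul_assoc]
        _ = _ := by rw [if_neg ha, if_neg hb]

theorem mulRightOffCentralizer_apply_of_mem {hx : ∀ g, g ∈ centralizer {x} ∨ x * g * x = g}
    (hg : g ∈ centralizer {x}) : mulRightOffCentralizer x hx g = g :=
  if_pos hg

theorem mulRightOffCentralizer_apply_of_notMem {hx : ∀ g, g ∈ centralizer {x} ∨ x * g * x = g}
    (hg : g ∉ centralizer {x}) : mulRightOffCentralizer x hx g = g * x :=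
  if_neg hg

theorem exists_mulAut_notMem_zpowers_of_orderOf_eq_four [(zpowers x).Normal] (hxc : x ∉ center G)
    (hx : orderOf x = 4) {H : Subgroup G} [Finite H] (hH : x ∈ H ∨ H ≤ center G) :
    ∃ α : MulAut G, H.map α.toMonoidHom = H ∧ ∃ g : G, α g ∉ zpowers g := by
  obtain ⟨g, hg⟩ := exists_notMem_centralizer_singleton hxc
  refine ⟨mulRightOffCentralizer x (mem_centralizer_or_mul_mul_eq_of_orderOf_eq_four hx),
    map_mulAut_eq_of_forall_mem fun y hy ↦ ?_, g, fun h ↦ hg ?_⟩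
  · by_cases hyx : y ∈ centralizer {x}
    · rwa [mulRightOffCentralizer_apply_of_mem hyx]
    · have hxH : x ∈ H := hH.resolve_right fun hHc ↦ hyx (center_le_centralizer _ (hHc hy))
      rw [mulRightOffCentralizer_apply_of_notMem hyx]
      exact mul_mem hy hxH
  · rw [mulRightOffCentralizer_apply_of_notMem hg, mul_mem_cancel_left (mem_zpowers g)] at h
    exact mem_centralizer_singleton_iff.mpr (commute_of_mem_zpowers_s5 h).symm.eq

theorem exists_mulAut_notMem_zpowers_of_center_ne_top (hG : ∀ H : Subgroup G, H.Normal)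
    (htors : IsMulTorsion G) (hcenter : center G ≠ ⊤) (H : Subgroup G) [Finite H] :
    ∃ α : MulAut G, H.map α.toMonoidHom = H ∧ ∃ g : G, α g ∉ zpowers g := by
  by_cases hH : H ≤ center G
  · obtain ⟨x, -, hxc, hx⟩ := exists_mem_notMem_center_orderOf_eq_four hG htors
      (mt top_le_iff.mp hcenter)
    exact exists_mulAut_notMem_zpowers_of_orderOf_eq_four hxc hx (Or.inr hH)
  · obtain ⟨x, hxH, hxc, hx⟩ := exists_mem_notMem_center_orderOf_eq_four hG htors hH
    exact exists_mulAut_notMem_zpowers_of_orderOf_eq_four hxc hx (Or.inl hxH)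

end OrderFour

/-- Let `R` be a finite Dedekind group (every subgroup is normal).  If `R` is not
cyclic, then for every subgroup `H` of `R` there is an automorphism of `R` fixing `H`
setwise which is not a power automorphism. -/
theorem stmt5 (R : Type*) [Group R] [Finite R] (hDedekind : ∀ H : Subgroup R, H.Normal)
    (hnc : ¬ IsCyclic R) (H : Subgroup R) :
    ∃ α : MulAut R, Subgroup.map α.toMonoidHom H = H ∧
      ∃ x : R, α x ∉ Subgroup.zpowers x := by
  by_cases hcenter : center R = ⊤
  · let : CommGroup R := Group.commGroupOfCenterEqTop hcenter
    exact exists_mulAut_notMem_zpowers_of_not_isCyclic hnc H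
  · exact exists_mulAut_notMem_zpowers_of_center_ne_top hDedekind isMulTorsion_of_finite hcenter H
end

section
/- Let R be a finite abelian group that is not cyclic. Then for every subgroup H of R there exists an automorphism α of R with α(H) = H that is not a power automorphism, i.e., α(x) ∉ ⟨x⟩ for some x ∈ R. -/
/-!
An endomorphism `δ` with `δ ∘ δ = 1` gives the automorphism `x ↦ x * δ x`; it preserves `H` as soon
as `δ` does, and it fails to be a power automorphism as soon as `δ x ∉ ⟨x⟩` for some `x`. We take
for `δ` the composite `R → R ⧸ M ≃ ⟨z⟩ ≤ R` with `M` of prime index `p` and `z ∈ M` of order `p`.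

Since `R` is not cyclic, neither is its `p`-torsion `R[p]` for some prime `p`: otherwise `⟨x⟩`, for
`x` of order the exponent of `R`, would contain every `R[p]`, hence every `p`-th root of each of its
elements. This leaves enough room in `R[p]` to choose `z ∈ M` outside some `⟨x⟩` with `x ∉ M`.

Finally `δ` preserves `H` if `H ≤ M` or `z ∈ H`. When `H` and the `p`-th powers do not generate `R`,
some `M` contains `H`; when they do, `R ⧸ H` is `p`-divisible of finite exponent, so it has no
`p`-torsion and `R[p] ≤ H`.
-/

open Monoid Subgroup

section Transvection

variable {G : Type*} [CommGroup G]

/-- The automorphism `x ↦ x * δ x` attached to an endomorphism `δ` with `δ ∘ δ = 1`; additively, it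
is the unipotent automorphism `1 + δ`. The condition on `δ` is encoded as `δ.range ≤ δ.ker`. -/
def transvection (δ : G →* G) (hδ : δ.range ≤ δ.ker) : MulAut G where
  toFun x := x * δ x
  invFun x := x / δ x
  left_inv x := by simp [show δ (δ x) = 1 from hδ ⟨x, rfl⟩]
  right_inv x := by simp [show δ (δ x) = 1 from hδ ⟨x, rfl⟩]
  map_mul' x y := by rw [map_mul, mul_mul_mul_comm]

theorem map_transvection_eq {δ : G →* G} (hδ : δ.range ≤ δ.ker) {H : Subgroup G}
    (hH : H.map δ ≤ H) : H.map (transvection δ hδ).toMonoidHom = H := by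
  have δ_mem {h : G} (hh : h ∈ H) : δ h ∈ H := hH (mem_map_of_mem δ hh)
  apply le_antisymm
  · rintro _ ⟨h, hh, rfl⟩
    exact mul_mem hh (δ_mem hh)
  · intro h hh
    exact ⟨h / δ h, div_mem hh (δ_mem hh), (transvection δ hδ).apply_symm_apply h⟩

theorem transvection_apply_mem_zpowers_iff {δ : G →* G} (hδ : δ.range ≤ δ.ker) {x : G} :
    transvection δ hδ x ∈ zpowers x ↔ δ x ∈ zpowers x :=
  mul_mem_cancel_left (mem_zpowers x)

end Transvection

section Power

variable {M : Type*}

theorem mem_of_pow_mem_of_forall_prime [Monoid M] {s : Set M}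
    (hs : ∀ p : ℕ, p.Prime → ∀ x, x ^ p ∈ s → x ∈ s) {n : ℕ} (hn : n ≠ 0) {x : M}
    (hx : x ^ n ∈ s) : x ∈ s := by
  induction n using induction_on_primes with
  | zero => exact absurd rfl hn
  | one => rwa [pow_one] at hx
  | prime_mul p n hp ih =>
    exact ih (right_ne_zero_of_mul hn) (hs p hp _ (by rwa [← pow_mul, mul_comm]))

theorem mem_zpowers_of_pow_prime_eq_one_s6 [Group M] {p : ℕ} [Fact p.Prime] {x y : M}
    (hx : x ^ p = 1) (hy : y ∈ zpowers x) (hy1 : y ≠ 1) : x ∈ zpowers y := by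
  have hx1 : x ≠ 1 := by
    rintro rfl
    exact hy1 (by simpa using hy)
  have hcard : Nat.card (zpowers x) = p := (Nat.card_zpowers x).trans (orderOf_eq_prime hx hx1)
  obtain ⟨k, hk⟩ := mem_zpowers_of_prime_card hcard
    (g := ⟨y, hy⟩) (g' := ⟨x, mem_zpowers x⟩) fun h ↦ hy1 (congrArg Subtype.val h)
  exact ⟨k, congrArg Subtype.val hk⟩

theorem coprime_exponent_of_surjective_pow [Monoid M] (hM : ExponentExists M) {n : ℕ}
    (hn : Function.Surjective fun x : M ↦ x ^ n) : n.Coprime (exponent M) := by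
  have hgcd : n.gcd (exponent M) ∣ exponent M := n.gcd_dvd_right _
  have hdvd : exponent M ∣ exponent M / n.gcd (exponent M) :=
    exponent_dvd_of_forall_pow_eq_one fun x ↦ by
      obtain ⟨y, rfl⟩ := hn x
      simp only [← pow_mul, ← Nat.mul_div_assoc n hgcd]
      exact exponent_dvd_iff_forall_pow_eq_one.1 (Nat.dvd_lcm_right n (exponent M)) y
  rw [Nat.dvd_div_iff_mul_dvd hgcd] at hdvd
  exact Nat.dvd_one.1 <| Nat.dvd_of_mul_dvd_mul_right (exponent_pos.2 hM) (by rwa [one_mul])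

end Power

section Torsion

variable {G : Type*} [CommGroup G]

/-- The subgroup `G[n]` of elements killed by `n`, realized as the kernel of the `n`-th power map;
for prime `p`, it is `G[p]` that detects whether `G` is cyclic. -/
def torsionSubgroup (G : Type*) [CommGroup G] (n : ℕ) : Subgroup G :=
  (powMonoidHom n : G →* G).ker

theorem mem_torsionSubgroup {n : ℕ} {x : G} : x ∈ torsionSubgroup G n ↔ x ^ n = 1 :=
  Iff.rfl

theorem torsionSubgroup_le_zpowers_of_dvd_orderOf {p : ℕ} [Fact p.Prime]
    [IsCyclic (torsionSubgroup G p)] {x : G} (hx : IsOfFinOrder x) (hp : p ∣ orderOf x) :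
    torsionSubgroup G p ≤ zpowers x := by
  obtain ⟨c, hc⟩ := (Subgroup.isCyclic_iff_exists_zpowers_eq_top (torsionSubgroup G p)).1 ‹_›
  let w := x ^ (orderOf x / p)
  obtain ⟨hwp, hw1⟩ : w ^ p = 1 ∧ w ≠ 1 :=
    orderOf_eq_prime_iff.1 (orderOf_pow_orderOf_div hx.orderOf_pos.ne' hp)
  have hwc : w ∈ zpowers c := hc ▸ hwp
  have hcp : c ∈ torsionSubgroup G p := hc ▸ mem_zpowers c
  calc torsionSubgroup G p = zpowers c := hc.symm
    _ ≤ zpowers w := zpowers_le.2 (mem_zpowers_of_pow_prime_eq_one_s6 hcp hwc hw1)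
    _ ≤ zpowers x := zpowers_le.2 (npow_mem_zpowers x _)

theorem mem_zpowers_of_pow_mem_of_torsionSubgroup_le {x y : G} {n : ℕ} (hx : IsOfFinOrder x)
    (hdvd : n ∣ orderOf x) (hyx : orderOf y ∣ orderOf x)
    (htors : torsionSubgroup G n ≤ zpowers x) (hy : y ^ n ∈ zpowers x) : y ∈ zpowers x := by
  obtain ⟨k, hk : x ^ k = y ^ n⟩ := hy
  obtain ⟨m, hm⟩ := hdvd
  have hm0 : (m : ℤ) ≠ 0 :=
    Nat.cast_ne_zero.2 (right_ne_zero_of_mul (hm ▸ hx.orderOf_pos.ne'))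
  have hkm : x ^ (k * m) = 1 := by
    rw [zpow_mul, hk, zpow_natCast, ← pow_mul, ← hm, orderOf_dvd_iff_pow_eq_one.1 hyx]
  obtain ⟨l, rfl⟩ : (n : ℤ) ∣ k := by
    rw [← orderOf_dvd_iff_zpow_eq_one, hm, Nat.cast_mul] at hkm
    exact Int.dvd_of_mul_dvd_mul_right hm0 hkm
  have hmem : y / x ^ l ∈ torsionSubgroup G n := by
    rw [mem_torsionSubgroup, div_pow, ← hk, ← zpow_natCast (x ^ l), ← zpow_mul, mul_comm, div_self']
  rw [← div_mul_cancel y (x ^ l)]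
  exact mul_mem (htors hmem) (zpow_mem_zpowers x l)

theorem isCyclic_of_forall_prime_isCyclic_torsionSubgroup (hG : ExponentExists G)
    (h : ∀ p : ℕ, p.Prime → IsCyclic (torsionSubgroup G p)) : IsCyclic G := by
  obtain ⟨x, hx⟩ := exists_orderOf_eq_exponent hG
  have mem_of_pow_mem (p : ℕ) (hp : p.Prime) (y : G) (hy : y ^ p ∈ zpowers x) : y ∈ zpowers x := by
    have : Fact p.Prime := ⟨hp⟩
    have hyx : orderOf y ∣ orderOf x := hx ▸ order_dvd_exponent y
    by_cases hdvd : p ∣ orderOf x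
    · have := h p hp
      exact mem_zpowers_of_pow_mem_of_torsionSubgroup_le hG.isOfFinOrder hdvd hyx
        (torsionSubgroup_le_zpowers_of_dvd_orderOf hG.isOfFinOrder hdvd) hy
    · have hcop : p.Coprime (orderOf y) :=
        ((hp.coprime_iff_not_dvd).2 hdvd).coprime_dvd_right hyx
      exact zpowers_le.2 hy (mem_zpowers_pow_iff.2 hcop)
  refine ⟨x, fun y ↦ mem_of_pow_mem_of_forall_prime mem_of_pow_mem hG.exponent_ne_zero ?_⟩
  rw [Monoid.pow_exponent_eq_one]
  exact one_mem (zpowers x)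

theorem torsionSubgroup_le_of_range_pow_sup_eq_top (hG : ExponentExists G) {n : ℕ}
    {H : Subgroup G} (hH : (powMonoidHom n : G →* G).range ⊔ H = ⊤) :
    torsionSubgroup G n ≤ H := by
  have hsurj : Function.Surjective fun x : G ⧸ H ↦ x ^ n := by
    rintro ⟨x⟩
    obtain ⟨_, ⟨y, rfl⟩, h, hh, rfl⟩ := mem_sup.1 (hH ▸ mem_top x)
    exact ⟨y, QuotientGroup.eq.2 (by simpa using hh)⟩
  have hquot : ExponentExists (G ⧸ H) := exponent_ne_zero.1 <| ne_zero_of_dvd_ne_zero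
    hG.exponent_ne_zero (MonoidHom.exponent_dvd (QuotientGroup.mk'_surjective H))
  intro z hz
  have hzn : (z : G ⧸ H) ^ n = 1 := congrArg (QuotientGroup.mk' H) hz
  exact (QuotientGroup.eq_one_iff z).1 <|
    (pow_eq_one_iff_of_coprime (coprime_exponent_of_surjective_pow hquot hsurj)).1
      ⟨hzn, Monoid.pow_exponent_eq_one _⟩

end Torsion

section PrimeIndex

variable {G : Type*} [CommGroup G] {p : ℕ} [Fact p.Prime]

theorem exists_monoidHom_ker_eq_range_eq_zpowers {M : Subgroup G} (hM : M.index = p) {z : G}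
    (hz : orderOf z = p) : ∃ δ : G →* G, δ.ker = M ∧ δ.range = zpowers z := by
  let e : G ⧸ M ≃* zpowers z := mulEquivOfPrimeCardEq hM ((Nat.card_zpowers z).trans hz)
  refine ⟨(zpowers z).subtype.comp (e.toMonoidHom.comp (QuotientGroup.mk' M)), ?_, ?_⟩
  · ext x
    simp [MonoidHom.mem_ker]
  · rw [MonoidHom.range_comp, MonoidHom.range_eq_top.2
      (e.surjective.comp (QuotientGroup.mk'_surjective M)), ← MonoidHom.range_eq_map, range_subtype]

theorem exists_le_index_eq_of_forall_pow_mem {N : Subgroup G} (hN : N ≠ ⊤)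
    (hpow : ∀ x, x ^ p ∈ N) : ∃ M, N ≤ M ∧ M.index = p := by
  obtain ⟨x, hx⟩ := SetLike.exists_not_mem_of_ne_top N hN
  have : Module (ZMod p) (Additive (G ⧸ N)) := AddCommGroup.zmodModule fun y ↦ by
    obtain ⟨y, rfl⟩ := QuotientGroup.mk_surjective y.toMul
    exact (QuotientGroup.eq_one_iff _).2 (hpow y)
  obtain ⟨f, hf⟩ : ∃ f : Module.Dual (ZMod p) (Additive (G ⧸ N)), f (.ofMul (x : G ⧸ N)) ≠ 0 :=
    Module.Projective.exists_dual_ne_zero _ fun h ↦ hx ((QuotientGroup.eq_one_iff x).1 h)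
  let φ : G →* Multiplicative (ZMod p) :=
    (AddMonoidHom.toMultiplicativeRight f.toAddMonoidHom).comp (QuotientGroup.mk' N)
  have hφ : φ.range = ⊤ := by
    have hcard : Nat.card (Multiplicative (ZMod p)) = p := by simp
    have hφx : zpowers (φ x) = ⊤ := zpowers_eq_top_of_prime_card hcard hf
    exact top_unique (hφx.ge.trans (zpowers_le.2 ⟨x, rfl⟩))
  refine ⟨φ.ker, fun y hy ↦ ?_, ?_⟩
  · simp [φ, MonoidHom.mem_ker, (QuotientGroup.eq_one_iff y).2 hy]
  · simp [index_ker, hφ]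

theorem exists_mem_orderOf_eq_notMem_zpowers {M : Subgroup G} (hM : M.index = p)
    (hcyc : ¬ IsCyclic (torsionSubgroup G p)) :
    ∃ z ∈ M, orderOf z = p ∧ ∃ x ∉ M, z ∉ zpowers x := by
  by_cases hle : torsionSubgroup G p ≤ M
  · have hne : M ≠ ⊤ := by
      rintro rfl
      exact (Fact.out : p.Prime).ne_one (hM ▸ index_top)
    obtain ⟨x, hx⟩ := SetLike.exists_not_mem_of_ne_top M hne
    obtain ⟨z, hz, hzx⟩ : ∃ z ∈ torsionSubgroup G p, z ∉ zpowers x :=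
      SetLike.not_le_iff_exists.1 fun h ↦ hcyc (isCyclic_of_le h)
    have hz1 : z ≠ 1 := by
      rintro rfl
      exact hzx (one_mem _)
    exact ⟨z, hle hz, orderOf_eq_prime hz hz1, x, hx, hzx⟩
  · obtain ⟨x, hx, hxM⟩ := SetLike.not_le_iff_exists.1 hle
    let π : torsionSubgroup G p →* G ⧸ M := (QuotientGroup.mk' M).comp (torsionSubgroup G p).subtype
    have hπ : ¬ Function.Injective π := fun h ↦ by
      have : IsCyclic (G ⧸ M) := isCyclic_of_prime_card hM
      exact hcyc (isCyclic_of_injective π h)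
    obtain ⟨⟨z, hz⟩, hzM, hz1⟩ : ∃ z, π z = 1 ∧ z ≠ 1 := by
      simpa [injective_iff_map_eq_one] using hπ
    have hz1 : z ≠ 1 := fun h ↦ hz1 (Subtype.ext h)
    have hzM : z ∈ M := (QuotientGroup.eq_one_iff z).1 hzM
    refine ⟨z, hzM, orderOf_eq_prime hz hz1, x, hxM, fun hzx ↦ hxM ?_⟩
    exact zpowers_le.2 hzM (mem_zpowers_of_pow_prime_eq_one_s6 hx hzx hz1)

theorem exists_mulAut_map_eq_notMem_zpowers {M H : Subgroup G} (hM : M.index = p)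
    (hcyc : ¬ IsCyclic (torsionSubgroup G p)) (hH : H ≤ M ∨ torsionSubgroup G p ≤ H) :
    ∃ α : MulAut G, H.map α.toMonoidHom = H ∧ ∃ x, α x ∉ zpowers x := by
  obtain ⟨z, hzM, hz, x, hxM, hzx⟩ := exists_mem_orderOf_eq_notMem_zpowers hM hcyc
  obtain ⟨hzp, -⟩ := orderOf_eq_prime_iff.1 hz
  obtain ⟨δ, rfl, hrange⟩ := exists_monoidHom_ker_eq_range_eq_zpowers hM hz
  have hδ : δ.range ≤ δ.ker := hrange.trans_le (zpowers_le.2 hzM)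
  refine ⟨transvection δ hδ, map_transvection_eq hδ ?_, x, fun hmem ↦ hzx ?_⟩
  · rcases hH with hker | htors
    · rw [(map_eq_bot_iff H).2 hker]
      exact bot_le
    · calc H.map δ ≤ δ.range := map_le_range δ H
        _ = zpowers z := hrange
        _ ≤ H := zpowers_le.2 (htors hzp)
  · have hδx : δ x ∈ zpowers z := hrange ▸ ⟨x, rfl⟩
    exact zpowers_le.2 ((transvection_apply_mem_zpowers_iff hδ).1 hmem)
      (mem_zpowers_of_pow_prime_eq_one_s6 hzp hδx hxM)

end PrimeIndex

theorem stmt6_general (R : Type*) [CommGroup R] (hexp : ExponentExists R) (hnc : ¬ IsCyclic R)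
    (H : Subgroup R) :
    ∃ α : MulAut R, Subgroup.map α.toMonoidHom H = H ∧
      ∃ x : R, α x ∉ Subgroup.zpowers x := by
  obtain ⟨p, hp, hcyc⟩ : ∃ p : ℕ, p.Prime ∧ ¬ IsCyclic (torsionSubgroup R p) := by
    by_contra! h
    exact hnc (isCyclic_of_forall_prime_isCyclic_torsionSubgroup hexp h)
  have : Fact p.Prime := ⟨hp⟩
  let P : Subgroup R := (powMonoidHom p : R →* R).range
  have hpow (x : R) : x ^ p ∈ P := ⟨x, rfl⟩
  by_cases hPH : P ⊔ H = ⊤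
  · have hP : P ≠ ⊤ := fun hP ↦ hcyc <| isCyclic_of_le <|
      torsionSubgroup_le_of_range_pow_sup_eq_top hexp (H := ⊥) (by rwa [sup_bot_eq])
    obtain ⟨M, -, hM⟩ := exists_le_index_eq_of_forall_pow_mem hP hpow
    exact exists_mulAut_map_eq_notMem_zpowers hM hcyc <| .inr <|
      torsionSubgroup_le_of_range_pow_sup_eq_top hexp hPH
  · obtain ⟨M, hPHM, hM⟩ := exists_le_index_eq_of_forall_pow_mem hPH fun x ↦ mem_sup_left (hpow x)
    exact exists_mulAut_map_eq_notMem_zpowers hM hcyc (.inl (le_sup_right.trans hPHM))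

/-- Let `R` be a finite abelian group that is not cyclic.  Then for every subgroup
`H` of `R` there is an automorphism of `R` fixing `H` setwise which is not a power
automorphism. -/
theorem stmt6 (R : Type*) [CommGroup R] [Finite R] (hnc : ¬ IsCyclic R) (H : Subgroup R) :
    ∃ α : MulAut R, Subgroup.map α.toMonoidHom H = H ∧
      ∃ x : R, α x ∉ Subgroup.zpowers x :=
  stmt6_general R .of_finite hnc H
end
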